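/- arXiv:1405.6107 — 2 statements merged into one kernel-verified Lean document; each statement's English description precedes it below -/
import Mathlib

section
/- Assume the Continuum Hypothesis. If X is a productively Lindelöf topological space of countable tightness, then X is powerfully Lindelöf. -/
open Set Cardinal Topology

universe u v

/-- A space is quasi-Lindelöf if every open cover has a countable subcover
(no separation axioms assumed). -/
def QuasiLindelofSp (X : Type u) [TopologicalSpace X] : Prop :=
  ∀ 𝒰 : Set (Set X), (∀ U ∈ 𝒰, IsOpen U) → ⋃₀ 𝒰 = Set.univ →
    ∃ 𝒱 ⊆ 𝒰, 𝒱.Countable ∧ ⋃₀ 𝒱 = Set.univ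

/-- Lindelöf in the sense of Engelking: regular (T3, including T1) and
every open cover has a countable subcover. -/
def EngLindelofSp (X : Type u) [TopologicalSpace X] : Prop :=
  RegularSpace X ∧ T1Space X ∧ QuasiLindelofSp X

/-- X is productively Lindelöf if X × Y is Lindelöf for every Lindelöf space Y. -/
def ProductivelyLindelofSp (X : Type u) [TopologicalSpace X] : Prop :=
  ∀ (Y : Type u) [TopologicalSpace Y], EngLindelofSp Y → EngLindelofSp (X × Y)

/-- X is productively quasi-Lindelöf if X × Y is quasi-Lindelöf for every Lindelöf space Y. -/
def ProductivelyQuasiLindelofSp (X : Type u) [TopologicalSpace X] : Prop :=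
  ∀ (Y : Type u) [TopologicalSpace Y], EngLindelofSp Y → QuasiLindelofSp (X × Y)

/-- X is powerfully Lindelöf if X^ω is Lindelöf. -/
def PowerfullyLindelofSp (X : Type u) [TopologicalSpace X] : Prop :=
  EngLindelofSp (ℕ → X)

/-- X is powerfully quasi-Lindelöf if X^ω is quasi-Lindelöf. -/
def PowerfullyQuasiLindelofSp (X : Type u) [TopologicalSpace X] : Prop :=
  QuasiLindelofSp (ℕ → X)

/-- Tightness of X is at most κ. -/
def TightnessLE (X : Type u) [TopologicalSpace X] (κ : Cardinal.{u}) : Prop :=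
  ∀ (A : Set X) (x : X), x ∈ closure A → ∃ B ⊆ A, #B ≤ κ ∧ x ∈ closure B

/-- X has countable tightness. -/
def CountableTightness (X : Type u) [TopologicalSpace X] : Prop :=
  ∀ (A : Set X) (x : X), x ∈ closure A → ∃ B ⊆ A, B.Countable ∧ x ∈ closure B

/-- The Lindelöf number of X is at most κ: every open cover has a subcover of size ≤ κ. -/
def LindelofNumberLE (X : Type u) [TopologicalSpace X] (κ : Cardinal.{u}) : Prop :=
  ∀ 𝒰 : Set (Set X), (∀ U ∈ 𝒰, IsOpen U) → ⋃₀ 𝒰 = Set.univ →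
    ∃ 𝒱 ⊆ 𝒰, #𝒱 ≤ κ ∧ ⋃₀ 𝒱 = Set.univ

/-- The weight of X is at most κ: there is a base of size ≤ κ. -/
def WeightLE (X : Type u) [TopologicalSpace X] (κ : Cardinal.{u}) : Prop :=
  ∃ B : Set (Set X), TopologicalSpace.IsTopologicalBasis B ∧ #B ≤ κ

/-- N is a network for X. -/
def IsNetwork (X : Type u) [TopologicalSpace X] (N : Set (Set X)) : Prop :=
  ∀ (x : X) (U : Set X), IsOpen U → x ∈ U → ∃ n ∈ N, x ∈ n ∧ n ⊆ U

/-- X is linearly Lindelöf: regular (incl. T1) and every open cover linearly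
ordered by inclusion has a countable subcover. -/
def LinearlyLindelofSp (X : Type u) [TopologicalSpace X] : Prop :=
  RegularSpace X ∧ T1Space X ∧
    ∀ 𝒰 : Set (Set X), (∀ U ∈ 𝒰, IsOpen U) → IsChain (· ⊆ ·) 𝒰 → ⋃₀ 𝒰 = Set.univ →
      ∃ 𝒱 ⊆ 𝒰, 𝒱.Countable ∧ ⋃₀ 𝒱 = Set.univ

/-- U ⊆ X^ω is a basic open set: a product of open sets, all but finitely many of
which equal X. -/
def IsBasicOpen (X : Type u) [TopologicalSpace X] (U : Set (ℕ → X)) : Prop :=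
  ∃ V : ℕ → Set X, (∀ i, IsOpen (V i)) ∧ {i | V i ≠ Set.univ}.Finite ∧
    U = Set.pi Set.univ V

/-- A family of subsets of Z is point-κ if every point belongs to at most κ members. -/
def PointLE {Z : Type u} (𝒲 : Set (Set Z)) (κ : Cardinal.{u}) : Prop :=
  ∀ z : Z, #({W ∈ 𝒲 | z ∈ W}) ≤ κ

/-- A non-empty space is zero-dimensional if it is T1 and has a base of clopen sets. -/
def ZeroDimensionalSp (Y : Type u) [TopologicalSpace Y] : Prop :=
  Nonempty Y ∧ T1Space Y ∧
    ∃ B : Set (Set Y), TopologicalSpace.IsTopologicalBasis B ∧ ∀ b ∈ B, IsClopen b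

/-!
Let `X` be productively Lindelöf. If `c i` (`i < ω₁`) are points of a compact space that concentrate
on a Lindelöf set `P` disjoint from a continuous image of `X`, then `P` together with an isolated
point over each `c i` is a Lindelöf space whose product with `X` is not Lindelöf as soon as the
`c i` come from `X`. Choosing the `c i` by diagonalisation against the `𝔠 = ℵ₁` open sets around
the complement of the image, one sees (Michael) that every image of `X` in a compact metrizable
space is `σ`-compact.

If moreover `X` embeds in a cube `Z^ω₁`, then `X` is an Alster space. Given `Gδ` sets capturing
the compact subsets of `X`, enumerated so that countably many appear below each level, let `P`
consist of the points outside `X` that avoid every `Gδ` set up to whose level they agree with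
some point of `X`. A fusion argument, using `σ`-compactness of the images of `X` in countable
subcubes, shows that a closed set missing `P` is handled by countably many of the `Gδ` sets. Hence
`P` is Lindelöf, and if no countable subfamily covered `X`, points left uncovered at each level
would concentrate on `P`. Countable products of Alster spaces are Lindelöf.

For `X` of arbitrary weight, a cover of `X^ω` by at most `𝔠` sets defined by continuous functions is
pulled back from an image of `X` of weight at most `𝔠`, so has a countable subcover. Separable
closed subspaces have at most `𝔠` continuous functions, so their countable powers are Lindelöf:
each sequence `a` has a countable subfamily `T a` covering the power of the closure of its range. If
no countable subfamily covers `X^ω`, choose a point missed by `⋃ n, T (c n)` for each `c`, and let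
`S`, of size at most `𝔠`, be closed under taking the coordinates of these points. By countable
tightness the sets in the `T a`, `a : ℕ → S`, cover the power of `closure S`; a countable subfamily
does so already, but misses the point chosen for it, which lies in `S^ω`.
-/

section Lindelof

theorem quasiLindelofSp_iff_lindelofSpace {X : Type u} [TopologicalSpace X] :
    QuasiLindelofSp X ↔ LindelofSpace X := by
  constructor
  · intro h
    refine ⟨isLindelof_of_countable_subcover fun U hU hcover => ?_⟩
    obtain ⟨𝒱, h𝒱, hcount, hunion⟩ := h (range U) (forall_mem_range.2 hU)
      (by rw [sUnion_range, univ_subset_iff.1 hcover])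
    obtain ⟨t, -, ht⟩ := SurjOn.exists_bijOn_subset (f := U) (s := univ) (t := 𝒱)
      (by simpa [SurjOn] using h𝒱)
    refine ⟨t, ht.mapsTo.countable_of_injOn ht.injOn hcount, ?_⟩
    rw [← sUnion_image, ht.image_eq, hunion]
  · intro h 𝒰 hopen hcover
    obtain ⟨t, ht𝒰, htc, ht⟩ := isLindelof_univ.elim_countable_subcover_image (b := 𝒰) (c := id)
      hopen (by simp only [id, ← sUnion_eq_biUnion, hcover, subset_rfl])
    exact ⟨t, ht𝒰, htc, by simpa only [id, ← sUnion_eq_biUnion, univ_subset_iff] using ht⟩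

theorem engLindelofSp_iff {X : Type u} [TopologicalSpace X] :
    EngLindelofSp X ↔ T3Space X ∧ LindelofSpace X := by
  rw [EngLindelofSp, quasiLindelofSp_iff_lindelofSpace]
  exact ⟨fun ⟨_, _, h⟩ => ⟨{}, h⟩, fun ⟨_, h⟩ => ⟨inferInstance, inferInstance, h⟩⟩

namespace ProductivelyLindelofSp

variable {X Y : Type u} [TopologicalSpace X] [TopologicalSpace Y]

theorem lindelofSpace_prod (h : ProductivelyLindelofSp X) [T3Space Y] [LindelofSpace Y] :
    LindelofSpace (X × Y) :=
  (engLindelofSp_iff.1 (h Y (engLindelofSp_iff.2 ⟨‹_›, ‹_›⟩))).2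

theorem engLindelofSp (h : ProductivelyLindelofSp X) : EngLindelofSp X := by
  have hemb := (Homeomorph.prodPUnit.{u, u} X).symm.isClosedEmbedding
  obtain ⟨_, _⟩ := engLindelofSp_iff.1
    (h PUnit (engLindelofSp_iff.2 ⟨inferInstance, inferInstance⟩))
  exact engLindelofSp_iff.2 ⟨hemb.isEmbedding.t3Space, hemb.LindelofSpace⟩

theorem lindelofSpace (h : ProductivelyLindelofSp X) : LindelofSpace X :=
  (engLindelofSp_iff.1 h.engLindelofSp).2

theorem t3Space (h : ProductivelyLindelofSp X) : T3Space X :=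
  (engLindelofSp_iff.1 h.engLindelofSp).1

theorem of_surjective (h : ProductivelyLindelofSp X) [T3Space Y] {f : X → Y} (hf : Continuous f)
    (hsurj : Function.Surjective f) : ProductivelyLindelofSp Y := fun Z _ hZ => by
  obtain ⟨_, _⟩ := engLindelofSp_iff.1 hZ
  have : LindelofSpace (X × Z) := h.lindelofSpace_prod
  exact engLindelofSp_iff.2 ⟨inferInstance, .of_continuous_surjective
    (hf.prodMap continuous_id) (hsurj.prodMap Function.surjective_id)⟩

theorem of_isClosed (h : ProductivelyLindelofSp X) {F : Set X} (hF : IsClosed F) :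
    ProductivelyLindelofSp F := fun Y _ hY => by
  obtain ⟨_, _⟩ := engLindelofSp_iff.1 hY
  have : T3Space X := h.t3Space
  have : LindelofSpace (X × Y) := h.lindelofSpace_prod
  exact engLindelofSp_iff.2 ⟨inferInstance,
    (hF.isClosedEmbedding_subtypeVal.prodMap .id).LindelofSpace⟩

end ProductivelyLindelofSp

variable {X : Type u} {Y : Type v} [TopologicalSpace X] [TopologicalSpace Y]

theorem isLindelof_union_of_countable_diff {A B : Set X} (hA : IsLindelof A)
    (hB : ∀ G, IsOpen G → A ⊆ G → (B \ G).Countable) : IsLindelof (A ∪ B) := by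
  refine isLindelof_of_countable_subcover fun U hU hcover => ?_
  obtain ⟨s, hs, hAs⟩ := hA.elim_countable_subcover U hU (subset_union_left.trans hcover)
  obtain ⟨t, ht, hBt⟩ := (hB _ (isOpen_biUnion fun i _ => hU i) hAs).isLindelof
    |>.elim_countable_subcover U hU (sdiff_subset.trans (subset_union_right.trans hcover))
  refine ⟨s ∪ t, hs.union ht, ?_⟩
  rw [biUnion_union]
  exact union_subset (hAs.trans subset_union_left) (sdiff_subset_iff.1 hBt)

theorem isLindelof_of_forall_isOpen {A : Set X} (h : ∀ W, IsOpen W → A ⊆ W →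
    ∃ S ⊆ W, IsLindelof S ∧ IsLindelof (A \ S)) : IsLindelof A := by
  refine isLindelof_of_countable_subcover fun U hU hcover => ?_
  obtain ⟨S, hSW, hS, hAS⟩ := h _ (isOpen_iUnion hU) hcover
  obtain ⟨s, hs, hSs⟩ := hS.elim_countable_subcover U hU hSW
  obtain ⟨t, ht, hAt⟩ := hAS.elim_countable_subcover U hU (sdiff_subset.trans hcover)
  refine ⟨s ∪ t, hs.union ht, ?_⟩
  rw [biUnion_union]
  exact (sdiff_subset_iff.1 hAt).trans (union_subset_union_left _ hSs)

theorem isLindelof_preimage_of_isProperMap {f : X → Y} (hf : IsProperMap f) {M : Set Y}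
    (hM : IsLindelof M) : IsLindelof (f ⁻¹' M) := by
  intro F _ _ hF
  obtain ⟨y, hy, hyF⟩ := hM (f := F.map f)
    ((Filter.map_mono hF).trans (Filter.map_le_iff_le_comap.2 (by simp)))
  obtain ⟨x, rfl, hx⟩ := hf.clusterPt_of_mapClusterPt hyF
  exact ⟨x, hy, hx⟩

theorem isSigmaCompact_preimage_of_isProperMap {f : X → Y} (hf : IsProperMap f) {M : Set Y}
    (hM : IsSigmaCompact M) : IsSigmaCompact (f ⁻¹' M) := by
  obtain ⟨K, hK, rfl⟩ := hM
  rw [preimage_iUnion]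
  exact isSigmaCompact_iUnion_of_isCompact _ fun n => hf.isCompact_preimage (hK n)

theorem isSigmaCompact_of_isOpen [CompactSpace X] [T2Space X] [SecondCountableTopology X]
    {W : Set X} (hW : IsOpen W) : IsSigmaCompact W := by
  have : LocallyCompactSpace W := hW.locallyCompactSpace
  exact isSigmaCompact_iff_sigmaCompactSpace.2 inferInstance

theorem mk_opens_le_continuum (X : Type u) [TopologicalSpace X] [SecondCountableTopology X] :
    #(TopologicalSpace.Opens X) ≤ 𝔠 := by
  let B := TopologicalSpace.countableBasis X
  have hB := TopologicalSpace.isBasis_countableBasis X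
  have : Countable B := (TopologicalSpace.countable_countableBasis X).to_subtype
  have hinj : Function.Injective fun W : TopologicalSpace.Opens X => {b : B | b.1 ⊆ W} :=
    fun V W hVW => TopologicalSpace.Opens.ext (hB.eq_of_forall_subset_iff V.2 W.2
      fun b hb => iff_of_eq (congrArg (⟨b, hb⟩ ∈ ·) hVW))
  calc #(TopologicalSpace.Opens X) ≤ #(Set B) := mk_le_of_injective hinj
    _ = 2 ^ #B := mk_set
    _ ≤ 2 ^ ℵ₀ := power_le_power_left two_ne_zero mk_le_aleph0
    _ = 𝔠 := two_power_aleph0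

end Lindelof

section TestSpace

variable {C ι : Type u} [TopologicalSpace C] [TopologicalSpace ι] [DiscreteTopology ι]

/-- The subspace of `C × OnePoint ι` consisting of a copy of `P` at level `∞` together with an
isolated point above each `c i` at level `i`; multiplying by it tests productive Lindelöfness. -/
def testSpace (P : Set C) (c : ι → C) : Set (C × OnePoint ι) :=
  P ×ˢ {OnePoint.infty} ∪ range fun i => (c i, (i : OnePoint ι))

theorem finite_setOf_notMem_of_isCompact {K : Set C} (hK : IsCompact K) {G : Set (C × OnePoint ι)}
    (hG : IsOpen G) (hKG : K ×ˢ {OnePoint.infty} ⊆ G) (c : ι → C) :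
    {i | c i ∈ K ∧ (c i, (i : OnePoint ι)) ∉ G}.Finite := by
  obtain ⟨u, v, -, hv, hKu, hv', huv⟩ := generalized_tube_lemma hK isCompact_singleton hG hKG
  have hfin : ((↑) ⁻¹' v : Set ι)ᶜ.Finite :=
    ((OnePoint.isOpen_iff_of_mem (hv' rfl)).1 hv).2.finite_of_discrete
  exact hfin.subset fun i hi hiv => hi.2 (huv ⟨hKu hi.1, hiv⟩)

theorem isLindelof_testSpace {P : Set C} (hP : IsLindelof P) {c : ι → C}
    (hc : ∀ W, IsOpen W → P ⊆ W → ∃ S ⊆ W, IsSigmaCompact S ∧ {i | c i ∉ S}.Countable) :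
    IsLindelof (testSpace P c) := by
  have hlevel : IsLindelof (P ×ˢ {(OnePoint.infty : OnePoint ι)}) := by
    rw [prod_singleton]
    exact hP.image (by fun_prop)
  refine isLindelof_union_of_countable_diff hlevel fun G hG hPG => ?_
  obtain ⟨_, hSW, ⟨K, hK, rfl⟩, hS⟩ := hc ((·, OnePoint.infty) ⁻¹' G) (hG.preimage (by fun_prop))
    fun p hp => hPG ⟨hp, rfl⟩
  have hKG (n) : K n ×ˢ {OnePoint.infty} ⊆ G := by
    rintro ⟨p, _⟩ ⟨hp, rfl⟩
    exact hSW (mem_iUnion_of_mem n hp)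
  have hcount := hS.union (countable_iUnion fun n =>
    (finite_setOf_notMem_of_isCompact (hK n) hG (hKG n) c).countable)
  refine (hcount.image fun i => (c i, (i : OnePoint ι))).mono ?_
  rintro _ ⟨⟨i, rfl⟩, hi⟩
  refine mem_image_of_mem _ (or_iff_not_imp_left.2 fun hiS => ?_)
  obtain ⟨n, hn⟩ := mem_iUnion.1 (not_not.1 hiS)
  exact mem_iUnion_of_mem n ⟨hn, hi⟩

theorem ProductivelyLindelofSp.countable_of_concentrated {X C ι : Type u} [TopologicalSpace X]
    [TopologicalSpace C] [T3Space C] (h : ProductivelyLindelofSp X) {e : X → C} (he : Continuous e)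
    {P : Set C} (hP : IsLindelof P) (hPe : ∀ x, e x ∉ P) (x : ι → X)
    (hx : ∀ W, IsOpen W → P ⊆ W → ∃ S ⊆ W, IsSigmaCompact S ∧ {i | e (x i) ∉ S}.Countable) :
    Countable ι := by
  let _ : TopologicalSpace ι := ⊥
  have : DiscreteTopology ι := ⟨rfl⟩
  let Y := testSpace P fun i => e (x i)
  have : LindelofSpace Y := isLindelof_iff_lindelofSpace.1 (isLindelof_testSpace hP hx)
  have : LindelofSpace (X × Y) := h.lindelofSpace_prod
  let D : Set (X × Y) := {z | e z.1 = z.2.1.1}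
  have hD : IsLindelof D := (isClosed_eq (by fun_prop) (by fun_prop)).isLindelof
  have himage : (fun z : X × Y => z.2.1.2) '' D = range ((↑) : ι → OnePoint ι) := by
    ext q
    constructor
    · rintro ⟨⟨a, y, ⟨hy, _⟩ | ⟨i, rfl⟩⟩, ha, rfl⟩
      · exact absurd (ha ▸ hy) (hPe a)
      · exact mem_range_self i
    · rintro ⟨i, rfl⟩
      exact ⟨(x i, ⟨_, .inr (mem_range_self i)⟩), rfl, rfl⟩
  have hrange : IsLindelof (range ((↑) : ι → OnePoint ι)) := himage ▸ hD.image (by fun_prop)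
  rw [← image_univ, ← OnePoint.isOpenEmbedding_coe.isEmbedding.isLindelof_iff] at hrange
  exact countable_univ_iff.1 (isLindelof_iff_countable.1 hrange)

end TestSpace

section OmegaOne

/-- Well-orders of type `ω₁`: every proper initial segment is countable but the order is not. -/
class IsOmegaOne (Ω : Type u) [LinearOrder Ω] : Prop extends WellFoundedLT Ω, Uncountable Ω where
  countable_Iic (a : Ω) : (Iic a).Countable

theorem exists_isOmegaOne (hCH : (𝔠 : Cardinal.{v}) = ℵ₁) :
    ∃ (Ω : Type u) (_ : LinearOrder Ω), IsOmegaOne Ω ∧ #Ω = 𝔠 := by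
  have hCH' : (𝔠 : Cardinal.{u}) = ℵ₁ := by
    rw [← lift_inj.{u, v}, lift_continuum, ← lift_continuum.{u, v}, hCH]
    simp
  let Ω := (ℵ₁ : Cardinal.{u}).ord.ToType
  have hcard : #Ω = ℵ₁ := by simp [Ω]
  have : Uncountable Ω := by
    rw [← aleph0_lt_mk_iff, hcard]
    exact aleph0_lt_aleph_one
  refine ⟨Ω, inferInstance, ⟨fun a => ?_⟩, hcard.trans hCH'.symm⟩
  rw [← Iio_insert, countable_insert, ← le_aleph0_iff_set_countable, ← lt_aleph_one_iff]
  exact (mk_Iio_lt a (by simp [Ω])).trans_eq hcard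

variable {Ω : Type u} [LinearOrder Ω] [IsOmegaOne Ω]

instance IsOmegaOne.countable_Iio (a : Ω) : Countable (Iio a) :=
  ((IsOmegaOne.countable_Iic a).mono Iio_subset_Iic_self).to_subtype

theorem exists_forall_lt_of_countable {S : Set Ω} (hS : S.Countable) : ∃ b, ∀ a ∈ S, a < b := by
  by_contra! h
  refine not_countable_univ (α := Ω) ((hS.biUnion fun a _ => IsOmegaOne.countable_Iic a).mono ?_)
  intro b _
  obtain ⟨a, ha, hab⟩ := h b
  exact mem_biUnion ha hab

theorem exists_gt_forall_lt_map_lt (f : Ω → Ω) (a : Ω) : ∃ δ > a, ∀ b < δ, f b < δ := by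
  have hstep (b : Ω) : ∃ c, ∀ a ≤ b, f a < c := by
    obtain ⟨c, hc⟩ := exists_forall_lt_of_countable ((IsOmegaOne.countable_Iic b).image f)
    exact ⟨c, fun a ha => hc _ (mem_image_of_mem f ha)⟩
  choose g hfg using hstep
  have hbdd : {c | ∀ n, g^[n] a < c}.Nonempty := by
    obtain ⟨c, hc⟩ := exists_forall_lt_of_countable (countable_range fun n => g^[n] a)
    exact ⟨c, fun n => hc _ (mem_range_self n)⟩
  obtain ⟨δ, hδ, hmin⟩ := wellFounded_lt.has_min _ hbdd
  refine ⟨δ, hδ 0, fun b hb => ?_⟩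
  obtain ⟨n, hn⟩ : ∃ n, b ≤ g^[n] a := by
    by_contra! h
    exact hmin b h hb
  calc f b < g (g^[n] a) := hfg _ b hn
    _ = g^[n + 1] a := (Function.iterate_succ_apply' g n a).symm
    _ < δ := hδ (n + 1)

theorem exists_forall_finset_map_lt {σ : Type v} {B : Ω → Set σ} (hB : ∀ a, (B a).Countable)
    (d : Finset σ → Ω) : ∃ δ, ∀ F : Finset σ, ↑F ⊆ ⋃ a < δ, B a → d F < δ := by
  have hbdd (b : Ω) : ∃ c, ∀ F : Finset σ, ↑F ⊆ ⋃ a ≤ b, B a → d F < c := by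
    have hcount : {F : Finset σ | ↑F ⊆ ⋃ a ≤ b, B a}.Countable := by
      have hBb := (IsOmegaOne.countable_Iic b).biUnion fun a _ => hB a
      exact ((countable_ofPred_finite_subset hBb).preimage Finset.coe_injective).mono
        fun F hF => And.intro F.finite_toSet hF
    obtain ⟨c, hc⟩ := exists_forall_lt_of_countable (hcount.image d)
    exact ⟨c, fun F hF => hc _ (mem_image_of_mem d hF)⟩
  choose f hf using hbdd
  obtain ⟨a₀⟩ : Nonempty Ω := inferInstance
  obtain ⟨δ, hδ, hclosed⟩ := exists_gt_forall_lt_map_lt f a₀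
  refine ⟨δ, fun F hF => ?_⟩
  have hmono : Monotone fun b => ⋃ a ≤ b, B a :=
    fun b c hbc => biUnion_subset_biUnion_left fun a hab => le_trans hab hbc
  obtain ⟨b, hb, hFb⟩ := DirectedOn.exists_mem_subset_of_finset_subset_biUnion ⟨a₀, hδ⟩
    (f := fun b => ⋃ a ≤ b, B a) (c := Iio δ) (fun a ha b hb =>
      ⟨max a b, max_lt ha hb, hmono (le_max_left a b), hmono (le_max_right a b)⟩)
    (hF.trans (iUnion₂_mono fun b _ => subset_iUnion₂_of_subset b le_rfl subset_rfl))
  exact (hf b F hFb).trans (hclosed b hb)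

theorem exists_closed_under_inter {C : Type v} {B : Ω → Set (Set C)} (hB : ∀ a, (B a).Countable)
    {P : Set C → Prop} {L : Set C} (hL : P L) (d : Set C → Ω) :
    ∃ (δ : Ω) (S : Set (Set C)), L ∈ S ∧ (∀ M ∈ S, P M ∧ d M < δ) ∧
      ∀ M ∈ S, ∀ a < δ, ∀ b ∈ B a, P (M ∩ b) → M ∩ b ∈ S := by
  classical
  obtain ⟨δ, hδ⟩ := exists_forall_finset_map_lt hB fun F => d (L ∩ ⋂₀ F)
  refine ⟨δ, {M | P M ∧ ∃ F : Finset (Set C), ↑F ⊆ ⋃ a < δ, B a ∧ M = L ∩ ⋂₀ F},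
    ⟨hL, ∅, by simp, by simp⟩, ?_, ?_⟩
  · rintro _ ⟨hM, F, hF, rfl⟩
    exact ⟨hM, hδ F hF⟩
  · rintro _ ⟨-, F, hF, rfl⟩ a ha b hb hMb
    refine ⟨hMb, insert b F, ?_, ?_⟩
    · rw [Finset.coe_insert, insert_subset_iff]
      exact ⟨mem_biUnion ha hb, hF⟩
    · rw [Finset.coe_insert, sInter_insert, inter_assoc, inter_comm b]

end OmegaOne

section Michael

variable {X Ω H : Type u} [TopologicalSpace X] [LinearOrder Ω] [IsOmegaOne Ω] [TopologicalSpace H]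
  [CompactSpace H] [T2Space H] [SecondCountableTopology H]

theorem ProductivelyLindelofSp.isSigmaCompact_range (h : ProductivelyLindelofSp X) (hΩ : #Ω = 𝔠)
    {f : X → H} (hf : Continuous f) : IsSigmaCompact (range f) := by
  obtain ⟨r⟩ : #(TopologicalSpace.Opens H) ≤ #Ω := (mk_opens_le_continuum H).trans_eq hΩ.symm
  by_contra hσ
  have hdiag (i : Ω) : ∃ x, ∀ W : TopologicalSpace.Opens H, (range f)ᶜ ⊆ W → r W ≤ i → f x ∈ W := by
    by_contra! hx
    let T := {W : TopologicalSpace.Opens H | (range f)ᶜ ⊆ W ∧ r W ≤ i}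
    have hT : T.Countable :=
      ((IsOmegaOne.countable_Iic i).preimage r.injective).mono fun W hW => hW.2
    have hrange : range f = ⋃ W ∈ T, (W : Set H)ᶜ := by
      refine Subset.antisymm ?_ (iUnion₂_subset fun W hW => compl_subset_comm.1 hW.1)
      rintro _ ⟨x, rfl⟩
      obtain ⟨W, hPW, hWi, hxW⟩ := hx x
      exact mem_biUnion (x := W) ⟨hPW, hWi⟩ hxW
    rw [hrange] at hσ
    exact hσ (isSigmaCompact_biUnion hT
      fun W _ => W.isOpen.isClosed_compl.isCompact.isSigmaCompact)
  choose x hx using hdiag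
  refine not_countable (α := Ω) ((h.countable_of_concentrated hf
    (HereditarilyLindelofSpace.isLindelof (range f)ᶜ) (fun x hxP => hxP (mem_range_self x)) x) ?_)
  intro W hW hPW
  refine ⟨W, subset_rfl, isSigmaCompact_of_isOpen hW, ?_⟩
  refine (IsOmegaOne.countable_Iic (r ⟨W, hW⟩)).mono fun i hi => ?_
  exact (lt_of_not_ge fun hri => hi (hx i ⟨W, hW⟩ hPW hri)).le

end Michael

section Restriction

variable {Ω : Type u} {Z : Type v}

/-- The largest subset of `W` that is determined by the coordinates in `A`. -/
def cylinderCore (A : Set Ω) (W : Set (Ω → Z)) : Set (Ω → Z) :=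
  {p | ∀ q, EqOn q p A → q ∈ W}

theorem cylinderCore_subset (A : Set Ω) (W : Set (Ω → Z)) : cylinderCore A W ⊆ W :=
  fun p hp => hp p fun _ _ => rfl

theorem cylinderCore_mono_left {A B : Set Ω} (hAB : A ⊆ B) (W : Set (Ω → Z)) :
    cylinderCore A W ⊆ cylinderCore B W :=
  fun _ hp q hqp => hp q (hqp.mono hAB)

theorem dependsOn_mem_cylinderCore (A : Set Ω) (W : Set (Ω → Z)) :
    DependsOn (· ∈ cylinderCore A W) A := fun _ _ hpq =>
  propext (forall_congr' fun _ => imp_congr_left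
    ⟨fun h => h.trans hpq, fun h => h.trans (EqOn.symm hpq)⟩)

theorem cylinderCore_eq_preimage (A : Set Ω) (W : Set (Ω → Z)) :
    cylinderCore A W = A.domRestrict ⁻¹' (A.domRestrict '' Wᶜ)ᶜ := by
  ext p
  simp only [cylinderCore, mem_ofPred_eq, mem_preimage, mem_compl_iff, mem_image,
    domRestrict_eq_domRestrict_iff, not_exists, not_and', not_not]

variable [TopologicalSpace Z] [CompactSpace Z] [T2Space Z]

theorem isProperMap_domRestrict (A : Set Ω) : IsProperMap (A.domRestrict : (Ω → Z) → A → Z) :=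
  (Pi.continuous_domRestrict A).isProperMap

theorem isOpen_compl_domRestrict_image_compl (A : Set Ω) {W : Set (Ω → Z)} (hW : IsOpen W) :
    IsOpen (A.domRestrict '' Wᶜ)ᶜ :=
  ((isProperMap_domRestrict A).isClosedMap _ hW.isClosed_compl).isOpen_compl

theorem isOpen_cylinderCore (A : Set Ω) {W : Set (Ω → Z)} (hW : IsOpen W) :
    IsOpen (cylinderCore A W) :=
  cylinderCore_eq_preimage A W ▸
    (isOpen_compl_domRestrict_image_compl A hW).preimage (Pi.continuous_domRestrict A)

theorem exists_subset_cylinderCore_Iio [LinearOrder Ω] [IsOmegaOne Ω] {K W : Set (Ω → Z)}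
    (hK : IsCompact K) (hW : IsOpen W) (hKW : K ⊆ W) : ∃ δ, K ⊆ cylinderCore (Iio δ) W := by
  refine hK.elim_directed_cover (fun δ => cylinderCore (Iio δ) W)
    (fun δ => isOpen_cylinderCore _ hW) (fun p hp => ?_)
    (Monotone.directed_le fun _ _ h => cylinderCore_mono_left (Iio_subset_Iio h) W)
  obtain ⟨I, u, hu, huW⟩ := isOpen_pi_iff.1 hW p (hKW hp)
  obtain ⟨δ, hδ⟩ := exists_forall_lt_of_countable I.countable_toSet
  refine mem_iUnion.2 ⟨δ, fun q hqp => huW fun i hi => ?_⟩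
  rw [hqp (hδ i hi)]
  exact (hu i hi).2

theorem exists_isOpen_disjoint_cylinder [LinearOrder Ω] {R : Set (Ω → Z)} {a δ : Ω}
    (haδ : a ≤ δ) {p : Ω → Z} (hp : ∀ x ∈ R, ¬ EqOn p x (Iio a))
    {V : Set (Iio δ → Z)} (hV : IsCompact V) (hVR : V ⊆ (Iio δ).domRestrict '' R)
    {B : Set (Set (Iio a → Z))} (hB : TopologicalSpace.IsTopologicalBasis B) :
    ∃ b ∈ B, (Iio a).domRestrict p ∈ b ∧
      Disjoint ((Iio a).domRestrict ⁻¹' closure b : Set (Ω → Z)) ((Iio δ).domRestrict ⁻¹' V) := by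
  let ρ : (Iio δ → Z) → Iio a → Z := domRestrict₂ (π := fun _ => Z) (Iio_subset_Iio haδ)
  have hρ : Continuous ρ := Pi.continuous_domRestrict₂ _
  have hpV : (Iio a).domRestrict p ∈ (ρ '' V)ᶜ := by
    rintro ⟨z, hz, hzp⟩
    obtain ⟨x, hx, rfl⟩ := hVR hz
    exact hp x hx (domRestrict_eq_domRestrict_iff.1 hzp).symm
  obtain ⟨b, hb, hpb, hbV⟩ := hB.exists_closure_subset
    ((hV.image hρ).isClosed.isOpen_compl.mem_nhds hpV)
  exact ⟨b, hb, hpb, disjoint_left.2 fun q hq hqV => hbV hq ⟨_, hqV, rfl⟩⟩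

variable [SecondCountableTopology Z]

theorem isSigmaCompact_cylinderCore {A : Set Ω} [Countable A] {W : Set (Ω → Z)} (hW : IsOpen W) :
    IsSigmaCompact (cylinderCore A W) :=
  cylinderCore_eq_preimage A W ▸ isSigmaCompact_preimage_of_isProperMap
    (isProperMap_domRestrict A)
    (isSigmaCompact_of_isOpen (isOpen_compl_domRestrict_image_compl A hW))

theorem isLindelof_of_dependsOn {A : Set Ω} [Countable A] {M : Set (Ω → Z)}
    (hM : DependsOn (· ∈ M) A) : IsLindelof M := by
  have hpre : M = A.domRestrict ⁻¹' (A.domRestrict '' M) := by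
    refine (subset_preimage_image _ _).antisymm ?_
    rintro p ⟨q, hq, hqp⟩
    exact (hM (domRestrict_eq_domRestrict_iff.1 hqp)).mp hq
  rw [hpre]
  exact isLindelof_preimage_of_isProperMap (isProperMap_domRestrict A)
    (HereditarilyLindelofSpace.isLindelof _)

end Restriction

section LeveledCover

theorem exists_mem_forall_notMem_of_refinement {C : Type u} [TopologicalSpace C] [CompactSpace C]
    {S : Set (Set C)} (hcl : ∀ L ∈ S, IsClosed L) (hne : ∀ L ∈ S, L.Nonempty) {B : Set (Set C)}
    (hB : B.Countable) (hstep : ∀ L ∈ S, ∀ b ∈ B, ∃ L' ∈ S, L' ⊆ L ∧ Disjoint L' b)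
    {L : Set C} (hL : L ∈ S) : ∃ p ∈ L, ∀ b ∈ B, p ∉ b := by
  rcases B.eq_empty_or_nonempty with rfl | hB₀
  · exact (hne L hL).imp fun p hp => ⟨hp, fun b hb => hb.elim⟩
  obtain ⟨b, rfl⟩ := hB.exists_eq_range hB₀
  choose! next hnext hsub hdisj using hstep
  let T : ℕ → Set C := fun n => Nat.rec L (fun n A => next A (b n)) n
  have hT (n : ℕ) : T n ∈ S := by
    induction n with
    | zero => exact hL
    | succ n ih => exact hnext _ ih _ (mem_range_self n)
  obtain ⟨p, hp⟩ := IsCompact.nonempty_iInter_of_sequence_nonempty_isCompact_isClosed T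
    (fun n => hsub _ (hT n) _ (mem_range_self n)) (fun n => hne _ (hT n)) (hcl _ hL).isCompact
    (fun n => hcl _ (hT n))
  rw [mem_iInter] at hp
  refine ⟨p, hp 0, forall_mem_range.2 fun n => ?_⟩
  exact disjoint_left.1 (hdisj _ (hT n) _ (mem_range_self n)) (hp (n + 1))

/-- A family of `Gδ` sets `G k` in the cube `Z^Ω`, each determined by the coordinates below its
level `lev k`, with countably many sets up to each level, such that every compact subset of `R`
lies in some `G k`. -/
structure IsLeveledCover {Ω κ : Type*} {Z : Type*} [LinearOrder Ω] [TopologicalSpace Z]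
    (R : Set (Ω → Z)) (G : κ → Set (Ω → Z)) (lev : κ → Ω) : Prop where
  isGδ (k : κ) : IsGδ (G k)
  dependsOn (k : κ) : DependsOn (· ∈ G k) (Iio (lev k))
  countable_setOf_le (δ : Ω) : {k | lev k ≤ δ}.Countable
  exists_superset (K : Set (Ω → Z)) : K ⊆ R → IsCompact K → ∃ k, K ⊆ G k

variable {Ω : Type u} {κ : Type*} {Z : Type v} [LinearOrder Ω]
  {R : Set (Ω → Z)} {G : κ → Set (Ω → Z)} {lev : κ → Ω} {L L' : Set (Ω → Z)}

/-- `L` is small if, for some level `δ`, the sets `G k` of level at most `δ` cover every point of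
`R` that agrees with a point of `L` below `δ`. -/
def IsSmall (R : Set (Ω → Z)) (G : κ → Set (Ω → Z)) (lev : κ → Ω) (L : Set (Ω → Z)) : Prop :=
  ∃ δ, ∀ x ∈ R, ∀ q ∈ L, EqOn q x (Iio δ) → ∃ k, lev k ≤ δ ∧ x ∈ G k

/-- The points outside `R` that escape every `G k` whose membership is already decided by their
agreement with a point of `R` below `lev k`. -/
def escapeSet (R : Set (Ω → Z)) (G : κ → Set (Ω → Z)) (lev : κ → Ω) : Set (Ω → Z) :=
  {p | p ∉ R ∧ ∀ k, (∃ x ∈ R, EqOn p x (Iio (lev k))) → p ∉ G k}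

theorem IsSmall.mono (hL : IsSmall R G lev L) (h : L' ⊆ L) : IsSmall R G lev L' :=
  hL.imp fun _ hδ x hx q hq => hδ x hx q (h hq)

theorem isSmall_iUnion [IsOmegaOne Ω] {ι : Type*} [Countable ι] {M : ι → Set (Ω → Z)}
    (hM : ∀ i, IsSmall R G lev (M i)) : IsSmall R G lev (⋃ i, M i) := by
  choose d hd using hM
  obtain ⟨δ, hδ⟩ := exists_forall_lt_of_countable (countable_range d)
  refine ⟨δ, fun x hx q hq hqx => ?_⟩
  obtain ⟨i, hi⟩ := mem_iUnion.1 hq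
  have hdδ : d i ≤ δ := (hδ _ (mem_range_self i)).le
  obtain ⟨k, hk, hxk⟩ := hd i x hx q hi (hqx.mono (Iio_subset_Iio hdδ))
  exact ⟨k, hk.trans hdδ, hxk⟩

theorem isSmall_union [IsOmegaOne Ω] (hL : IsSmall R G lev L) (hL' : IsSmall R G lev L') :
    IsSmall R G lev (L ∪ L') := by
  rw [union_eq_iUnion]
  exact isSmall_iUnion (Bool.forall_bool.2 ⟨hL', hL⟩)

theorem nonempty_of_not_isSmall [IsOmegaOne Ω] (hL : ¬ IsSmall R G lev L) : L.Nonempty := by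
  rw [nonempty_iff_ne_empty]
  rintro rfl
  exact hL ⟨Classical.arbitrary Ω, fun x _ q hq => hq.elim⟩

variable [TopologicalSpace Z]

namespace IsLeveledCover

theorem isSmall (hG : IsLeveledCover R G lev) (k : κ) : IsSmall R G lev (G k) :=
  ⟨lev k, fun _ _ _ hq hqx => ⟨k, le_rfl, (hG.dependsOn k hqx).mp hq⟩⟩

variable [IsOmegaOne Ω]

theorem exists_not_isSmall_diff (hG : IsLeveledCover R G lev) (hL : ¬ IsSmall R G lev L) {k : κ}
    {O : ℕ → Set (Ω → Z)} (hO : G k = ⋂ n, O n) : ∃ n, ¬ IsSmall R G lev (L ∩ (O n)ᶜ) := by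
  by_contra! h
  refine hL ((isSmall_union (hG.isSmall k) (isSmall_iUnion h)).mono ?_)
  rw [← inter_iUnion, ← compl_iInter, ← hO]
  exact fun p hp => or_iff_not_imp_left.2 fun hpk => ⟨hp, hpk⟩

theorem exists_forall_nhds_not_isSmall [CompactSpace Z] (hG : IsLeveledCover R G lev)
    (hLc : IsClosed L) (hL : ¬ IsSmall R G lev L) :
    ∃ p ∈ L, p ∉ R ∧ ∀ N ∈ 𝓝 p, ¬ IsSmall R G lev (L ∩ N) := by
  by_contra! h
  choose! N hN hsmall using h
  let T : Set (Ω → Z) := L \ R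
  have hK : IsClosed (L \ ⋃ p ∈ T, interior (N p)) :=
    hLc.sdiff (isOpen_biUnion fun p _ => isOpen_interior)
  have hKR : L \ ⋃ p ∈ T, interior (N p) ⊆ R := by
    intro p hp
    by_contra hpR
    exact hp.2 (mem_biUnion (show p ∈ T from ⟨hp.1, hpR⟩)
      (mem_interior_iff_mem_nhds.2 (hN p hp.1 hpR)))
  obtain ⟨k, hk⟩ := hG.exists_superset _ hKR hK.isCompact
  have hlin : IsLindelof (L \ G k) := by
    obtain ⟨O, hO, hGO⟩ := isGδ_iff_eq_iInter_nat.1 (hG.isGδ k)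
    rw [hGO, sdiff_eq, compl_iInter, inter_iUnion]
    exact isLindelof_iUnion fun n => (hLc.inter (hO n).isClosed_compl).isCompact.isLindelof
  obtain ⟨t, htT, htc, ht⟩ := hlin.elim_countable_subcover_image (b := T)
    (c := fun p => interior (N p)) (fun _ _ => isOpen_interior)
    (fun p hp => by_contra fun hpN => hp.2 (hk ⟨hp.1, hpN⟩))
  have := htc.to_subtype
  refine hL ((isSmall_union (hG.isSmall k) (isSmall_iUnion fun p : t =>
    hsmall p (htT p.2).1 (htT p.2).2)).mono fun q hq => or_iff_not_imp_left.2 fun hqk => ?_)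
  obtain ⟨p, hp, hqp⟩ := mem_iUnion₂.1 (ht ⟨hq, hqk⟩)
  exact mem_iUnion.2 ⟨⟨p, hp⟩, hq, interior_subset hqp⟩

end IsLeveledCover

end LeveledCover

section Fusion

variable {Ω : Type u} {κ : Type*} {Z : Type v} [LinearOrder Ω] [IsOmegaOne Ω] [TopologicalSpace Z]
  [CompactSpace Z] [T2Space Z] [SecondCountableTopology Z]
  {R : Set (Ω → Z)} {G : κ → Set (Ω → Z)} {lev : κ → Ω} {L : Set (Ω → Z)}

namespace IsLeveledCover

theorem exists_refining_family (hG : IsLeveledCover R G lev)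
    (hsep : ∀ p ∉ R, ∃ a, ∀ x ∈ R, ¬ EqOn p x (Iio a)) (hLc : IsClosed L)
    (hL : ¬ IsSmall R G lev L) :
    ∃ (δ : Ω) (S : Set (Set (Ω → Z))), L ∈ S ∧ (∀ M ∈ S, IsClosed M ∧ M.Nonempty) ∧
      (∀ M ∈ S, ∀ V, IsCompact V → V ⊆ (Iio δ).domRestrict '' R →
        ∃ M' ∈ S, M' ⊆ M ∧ Disjoint M' ((Iio δ).domRestrict ⁻¹' V)) ∧
      ∀ M ∈ S, ∀ k, lev k < δ → ∃ M' ∈ S, M' ⊆ M ∧ Disjoint M' (G k) := by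
  choose O hO hGO using fun k => isGδ_iff_eq_iInter_nat.1 (hG.isGδ k)
  let B (a : Ω) : Set (Set (Ω → Z)) :=
    (fun b => (Iio a).domRestrict ⁻¹' closure b) '' TopologicalSpace.countableBasis (Iio a → Z) ∪
      ⋃ k ∈ {k | lev k ≤ a}, range fun n => (O k n)ᶜ
  have hB (a : Ω) : (B a).Countable :=
    ((TopologicalSpace.countable_countableBasis _).image _).union
      ((hG.countable_setOf_le a).biUnion fun k _ => countable_range _)
  have hpoint (M : Set (Ω → Z)) (hM : IsClosed M ∧ ¬ IsSmall R G lev M) : ∃ a p,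
      (∀ x ∈ R, ¬ EqOn p x (Iio a)) ∧ ∀ N ∈ 𝓝 p, ¬ IsSmall R G lev (M ∩ N) := by
    obtain ⟨p, -, hpR, hp⟩ := hG.exists_forall_nhds_not_isSmall hM.1 hM.2
    exact (hsep p hpR).imp fun a ha => ⟨p, ha, hp⟩
  choose! d hd using hpoint
  obtain ⟨δ, S, hLS, hS, hinter⟩ := exists_closed_under_inter hB
    (P := fun M => IsClosed M ∧ ¬ IsSmall R G lev M) ⟨hLc, hL⟩ d
  refine ⟨δ, S, hLS, fun M hM => ⟨(hS M hM).1.1, nonempty_of_not_isSmall (hS M hM).1.2⟩,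
    fun M hM V hV hVR => ?_, fun M hM k hk => ?_⟩
  · obtain ⟨hMP, hdδ⟩ := hS M hM
    obtain ⟨p, hpR, hp⟩ := hd M hMP
    obtain ⟨b, hb, hpb, hbV⟩ := exists_isOpen_disjoint_cylinder hdδ.le hpR hV hVR
      (TopologicalSpace.isBasis_countableBasis _)
    have hb' : closure b ∈ 𝓝 ((Iio (d M)).domRestrict p) := Filter.mem_of_superset
      ((TopologicalSpace.isOpen_of_mem_countableBasis hb).mem_nhds hpb) subset_closure
    have hcont := Pi.continuous_domRestrict (A := fun _ : Ω => Z) (Iio (d M))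
    exact ⟨_, hinter M hM _ hdδ _ (.inl (mem_image_of_mem _ hb))
      ⟨hMP.1.inter (isClosed_closure.preimage hcont),
        hp _ (hcont.continuousAt.preimage_mem_nhds hb')⟩,
      inter_subset_left, hbV.mono_left inter_subset_right⟩
  · obtain ⟨hMc, hMs⟩ := (hS M hM).1
    obtain ⟨n, hn⟩ := hG.exists_not_isSmall_diff hMs (hGO k)
    refine ⟨_, hinter M hM _ hk _ (.inr (mem_biUnion le_rfl (mem_range_self n)))
      ⟨hMc.inter (hO k n).isClosed_compl, hn⟩, inter_subset_left, ?_⟩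
    exact (disjoint_compl_left.mono_left inter_subset_right).mono_right
      ((hGO k).trans_subset (iInter_subset _ n))

theorem exists_mem_escapeSet (hG : IsLeveledCover R G lev)
    (hsep : ∀ p ∉ R, ∃ a, ∀ x ∈ R, ¬ EqOn p x (Iio a))
    (hσ : ∀ δ : Ω, IsSigmaCompact ((Iio δ).domRestrict '' R))
    (hLc : IsClosed L) (hL : ¬ IsSmall R G lev L) : ∃ p ∈ L, p ∈ escapeSet R G lev := by
  obtain ⟨δ, S, hLS, hS, hcyl, hGk⟩ := hG.exists_refining_family hsep hLc hL
  obtain ⟨V, hV, hVR⟩ := hσ δ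
  let B : Set (Set (Ω → Z)) := range (fun n => (Iio δ).domRestrict ⁻¹' V n) ∪ G '' {k | lev k < δ}
  have hB : B.Countable := (countable_range _).union
    (((hG.countable_setOf_le δ).mono fun _ h => le_of_lt h).image _)
  obtain ⟨p, hpL, hp⟩ := exists_mem_forall_notMem_of_refinement (fun M hM => (hS M hM).1)
    (fun M hM => (hS M hM).2) hB (fun M hM b hb => by
      rcases hb with ⟨n, rfl⟩ | ⟨k, hk, rfl⟩
      · exact hcyl M hM _ (hV n) ((subset_iUnion V n).trans hVR.subset)
      · exact hGk M hM k hk) hLS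
  have hpδ {x : Ω → Z} (hx : x ∈ R) : ¬ EqOn p x (Iio δ) := fun hpx => by
    have hmem : (Iio δ).domRestrict p ∈ ⋃ n, V n :=
      hVR ▸ ⟨x, hx, domRestrict_eq_domRestrict_iff.2 hpx.symm⟩
    obtain ⟨n, hn⟩ := mem_iUnion.1 hmem
    exact hp _ (.inl (mem_range_self n)) hn
  refine ⟨p, hpL, fun hpR => hpδ hpR fun _ _ => rfl, fun k ⟨x, hx, hpx⟩ => ?_⟩
  exact hp _ (.inr (mem_image_of_mem G
    (not_le.1 fun hδk => hpδ hx (hpx.mono (Iio_subset_Iio hδk)))))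

theorem exists_forall_mem_cylinderCore_or (hG : IsLeveledCover R G lev)
    (hsep : ∀ p ∉ R, ∃ a, ∀ x ∈ R, ¬ EqOn p x (Iio a))
    (hσ : ∀ δ : Ω, IsSigmaCompact ((Iio δ).domRestrict '' R))
    {W : Set (Ω → Z)} (hW : IsOpen W) (hPW : escapeSet R G lev ⊆ W) :
    ∃ δ, ∀ x ∈ R, x ∈ cylinderCore (Iio δ) W ∨ ∃ k, lev k ≤ δ ∧ x ∈ G k := by
  have hsmall : IsSmall R G lev Wᶜ := by
    by_contra h
    obtain ⟨p, hpW, hp⟩ := hG.exists_mem_escapeSet hsep hσ hW.isClosed_compl h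
    exact hpW (hPW hp)
  obtain ⟨δ, hδ⟩ := hsmall
  refine ⟨δ, fun x hx => or_iff_not_imp_right.2 fun hxk q hqx => ?_⟩
  by_contra hq
  exact hxk (hδ x hx q hq hqx)

theorem isLindelof_escapeSet (hG : IsLeveledCover R G lev)
    (hsep : ∀ p ∉ R, ∃ a, ∀ x ∈ R, ¬ EqOn p x (Iio a))
    (hσ : ∀ δ : Ω, IsSigmaCompact ((Iio δ).domRestrict '' R)) : IsLindelof (escapeSet R G lev) := by
  refine isLindelof_of_forall_isOpen fun W hW hPW => ?_
  obtain ⟨δ, hδ⟩ := hG.exists_forall_mem_cylinderCore_or hsep hσ hW hPW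
  refine ⟨cylinderCore (Iio δ) W, cylinderCore_subset _ W,
    (isSigmaCompact_cylinderCore hW).isLindelof, isLindelof_of_dependsOn (A := Iio δ) ?_⟩
  have hcore := dependsOn_mem_cylinderCore (Iio δ) W
  have hfar {p x : Ω → Z} (hp : p ∈ escapeSet R G lev \ cylinderCore (Iio δ) W) (hx : x ∈ R) :
      ¬ EqOn p x (Iio δ) := fun hpx => by
    obtain ⟨k, hk, hxk⟩ := (hδ x hx).resolve_left fun h => hp.2 ((hcore hpx).mpr h)
    have hpxk : EqOn p x (Iio (lev k)) := hpx.mono (Iio_subset_Iio hk)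
    exact hp.1.2 k ⟨x, hx, hpxk⟩ ((hG.dependsOn k hpxk).mpr hxk)
  have himp {p q : Ω → Z} (hpq : EqOn p q (Iio δ))
      (hp : p ∈ escapeSet R G lev \ cylinderCore (Iio δ) W) :
      q ∈ escapeSet R G lev \ cylinderCore (Iio δ) W := by
    refine ⟨⟨fun hqR => hfar hp hqR hpq, fun k ⟨x, hx, hqx⟩ hqk => ?_⟩,
      fun h => hp.2 ((hcore hpq).mpr h)⟩
    have hk : lev k ≤ δ := not_lt.1 fun hk =>
      hfar hp hx (hpq.trans (hqx.mono (Iio_subset_Iio hk.le)))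
    have hpqk : EqOn p q (Iio (lev k)) := hpq.mono (Iio_subset_Iio hk)
    exact hp.1.2 k ⟨x, hx, hpqk.trans hqx⟩ ((hG.dependsOn k hpqk).mpr hqk)
  exact fun p q hpq => propext ⟨himp hpq, himp (EqOn.symm hpq)⟩

end IsLeveledCover

end Fusion

section Alster

/-- Alster spaces: a family of `Gδ` sets such that every compact set lies in one of its members
has a countable subfamily covering the space. -/
def IsAlster (X : Type u) [TopologicalSpace X] : Prop :=
  ∀ 𝒢 : Set (Set X), (∀ M ∈ 𝒢, IsGδ M) → (∀ K, IsCompact K → ∃ M ∈ 𝒢, K ⊆ M) →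
    ∃ 𝒯 ⊆ 𝒢, 𝒯.Countable ∧ ⋃₀ 𝒯 = Set.univ

variable {X : Type u} [TopologicalSpace X]

theorem exists_forall_not_eqOn_Iio [LindelofSpace X] {Ω : Type u} [LinearOrder Ω] [IsOmegaOne Ω]
    {Z : Type*} [TopologicalSpace Z] [T2Space Z] {e : X → Ω → Z} (he : Continuous e)
    {p : Ω → Z} (hp : p ∉ range e) : ∃ a, ∀ x ∈ range e, ¬ EqOn p x (Iio a) := by
  have hcover : Set.univ ⊆ ⋃ ξ, {x | e x ξ ≠ p ξ} := fun x _ => mem_iUnion.2 <| by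
    by_contra! h
    exact hp ⟨x, funext fun ξ => of_not_not (h ξ)⟩
  obtain ⟨T, hT, hTc⟩ := isLindelof_univ.elim_countable_subcover _
    (fun ξ => isOpen_ne_fun ((continuous_apply ξ).comp he) continuous_const) hcover
  obtain ⟨a, ha⟩ := exists_forall_lt_of_countable hT
  refine ⟨a, forall_mem_range.2 fun x hpx => ?_⟩
  obtain ⟨ξ, hξ, hx⟩ := mem_iUnion₂.1 (hTc (mem_univ x))
  exact hx (hpx (ha ξ hξ)).symm

/-- A code for a `Gδ` subset of the cube `Z^Ω` that depends only on the coordinates below `level`: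
the open sets `opens n` of the corresponding subcube are intersected and pulled back. Unlike the
sets themselves, the codes of a given level are easily counted. -/
structure CountableCylinder (Ω : Type u) [LinearOrder Ω] (Z : Type v) [TopologicalSpace Z] where
  level : Ω
  opens : ℕ → TopologicalSpace.Opens (Iio level → Z)

namespace CountableCylinder

variable {Ω : Type u} [LinearOrder Ω] {Z : Type v} [TopologicalSpace Z]

/-- The `Gδ` subset of `Z^Ω` described by a countable cylinder. -/
def toSet (k : CountableCylinder Ω Z) : Set (Ω → Z) :=
  (Iio k.level).domRestrict ⁻¹' ⋂ n, k.opens n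

theorem isGδ_toSet (k : CountableCylinder Ω Z) : IsGδ k.toSet :=
  (IsGδ.iInter_of_isOpen fun n => (k.opens n).isOpen).preimage (Pi.continuous_domRestrict _)

theorem dependsOn_toSet (k : CountableCylinder Ω Z) : DependsOn (· ∈ k.toSet) (Iio k.level) :=
  fun _ _ hpq => congrArg (· ∈ ⋂ n, (k.opens n : Set (Iio k.level → Z)))
    (domRestrict_eq_domRestrict_iff.2 hpq)

variable [IsOmegaOne Ω]

theorem exists_between [CompactSpace Z] [T2Space Z] {K : Set (Ω → Z)} (hK : IsCompact K)
    {U : ℕ → Set (Ω → Z)} (hU : ∀ n, IsOpen (U n)) (hKU : ∀ n, K ⊆ U n) :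
    ∃ k : CountableCylinder Ω Z, K ⊆ k.toSet ∧ k.toSet ⊆ ⋂ n, U n := by
  choose d hd using fun n => exists_subset_cylinderCore_Iio hK (hU n) (hKU n)
  obtain ⟨δ, hδ⟩ := exists_forall_lt_of_countable (countable_range d)
  let k : CountableCylinder Ω Z :=
    ⟨δ, fun n => ⟨_, isOpen_compl_domRestrict_image_compl (Iio δ) (hU n)⟩⟩
  have hk : k.toSet = ⋂ n, cylinderCore (Iio δ) (U n) := by
    simp only [cylinderCore_eq_preimage, ← preimage_iInter]
    rfl
  refine ⟨k, ?_, ?_⟩ <;> rw [hk]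
  · exact subset_iInter fun n => (hd n).trans
      (cylinderCore_mono_left (Iio_subset_Iio (hδ _ (mem_range_self n)).le) _)
  · exact iInter_mono fun n => cylinderCore_subset _ _

theorem exists_injective_code {Z : Type} [TopologicalSpace Z]
    [SecondCountableTopology Z] (hΩ : #Ω = 𝔠) :
    ∃ r : CountableCylinder Ω Z → Ω, Function.Injective fun k => (k.level, r k) := by
  have hcard (δ : Ω) : #(ℕ → TopologicalSpace.Opens (Iio δ → Z)) ≤ #Ω :=
    calc #(ℕ → TopologicalSpace.Opens (Iio δ → Z))
        = #(TopologicalSpace.Opens (Iio δ → Z)) ^ ℵ₀ := by simp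
      _ ≤ 𝔠 ^ ℵ₀ := power_le_power_right (mk_opens_le_continuum _)
      _ = #Ω := continuum_power_aleph0.trans hΩ.symm
  let r (δ : Ω) := Classical.choice (hcard δ)
  refine ⟨fun k => r k.level k.opens, ?_⟩
  rintro ⟨δ, V⟩ ⟨δ', V'⟩ hk
  obtain ⟨rfl, hr⟩ := Prod.mk.inj hk
  exact congrArg _ ((r δ).injective hr)

end CountableCylinder

variable {Z : Type} [TopologicalSpace Z] [CompactSpace Z] [T2Space Z] [SecondCountableTopology Z]

section Levels

variable {Ω : Type u} [LinearOrder Ω] [IsOmegaOne Ω] {e : X → Ω → Z}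

theorem ProductivelyLindelofSp.exists_forall_exists_level_le (h : ProductivelyLindelofSp X)
    (hΩ : #Ω = 𝔠) (he : Continuous e) {κ : Type*} {G : κ → Set (Ω → Z)} {lev : κ → Ω}
    (hG : IsLeveledCover (range e) G lev) : ∃ δ, ∀ x, ∃ k, lev k ≤ δ ∧ e x ∈ G k := by
  have := h.lindelofSpace
  have hsep := fun p => exists_forall_not_eqOn_Iio (p := p) he
  have hσ (δ : Ω) : IsSigmaCompact ((Iio δ).domRestrict '' range e) := by
    rw [← range_comp]
    exact h.isSigmaCompact_range hΩ ((Pi.continuous_domRestrict _).comp he)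
  by_contra! hx
  choose x hx using hx
  refine not_countable (α := Ω) (h.countable_of_concentrated he
    (hG.isLindelof_escapeSet hsep hσ) (fun x hxP => hxP.1 (mem_range_self x)) x ?_)
  intro W hW hPW
  obtain ⟨δ, hδ⟩ := hG.exists_forall_mem_cylinderCore_or hsep hσ hW hPW
  refine ⟨cylinderCore (Iio δ) W, cylinderCore_subset _ W, isSigmaCompact_cylinderCore hW,
    (IsOmegaOne.countable_Iic δ).mono fun i hi => ?_⟩
  obtain ⟨k, hk, hik⟩ := (hδ _ (mem_range_self (x i))).resolve_left hi
  exact (not_le.1 fun hki => hx i k hki hik).le.trans hk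

theorem ProductivelyLindelofSp.isAlster_of_isInducing (h : ProductivelyLindelofSp X)
    (hΩ : #Ω = 𝔠) (he : IsInducing e) : IsAlster X := by
  intro 𝒢 h𝒢 hK𝒢
  obtain ⟨r, hr⟩ := CountableCylinder.exists_injective_code (Z := Z) hΩ
  let κ := {k : CountableCylinder Ω Z // ∃ M ∈ 𝒢, e ⁻¹' k.toSet ⊆ M}
  have hG : IsLeveledCover (range e) (fun k : κ => k.1.toSet) fun k => max k.1.level (r k) := by
    refine ⟨fun k => k.1.isGδ_toSet,
      fun k => k.1.dependsOn_toSet.mono (Iio_subset_Iio (le_max_left _ _)), fun δ => ?_, ?_⟩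
    · have hδ := IsOmegaOne.countable_Iic δ
      exact ((hδ.prod hδ).preimage (hr.comp Subtype.val_injective)).mono fun k => max_le_iff.1
    · intro K hKe hK
      obtain ⟨M, hM, hKM⟩ := hK𝒢 _ (he.isCompact_preimage' hK hKe)
      obtain ⟨O, hO, rfl⟩ := isGδ_iff_eq_iInter_nat.1 (h𝒢 M hM)
      choose U hU hUO using fun n => he.isOpen_iff.1 (hO n)
      have hKU (n : ℕ) : K ⊆ U n := fun p hp => by
        obtain ⟨x, rfl⟩ := hKe hp
        have hx := mem_iInter.1 (hKM hp) n
        rwa [← hUO n] at hx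
      obtain ⟨k, hKk, hkU⟩ := CountableCylinder.exists_between hK hU hKU
      refine ⟨⟨k, _, hM, (preimage_mono hkU).trans ?_⟩, hKk⟩
      rw [preimage_iInter]
      exact (iInter_congr hUO).subset
  obtain ⟨δ, hδ⟩ := h.exists_forall_exists_level_le hΩ he.continuous hG
  choose M hM hkM using fun k : κ => k.2
  refine ⟨M '' {k | max k.1.level (r k) ≤ δ}, image_subset_iff.2 fun k _ => hM k,
    (hG.countable_setOf_le δ).image _, eq_univ_of_forall fun x => ?_⟩
  obtain ⟨k, hk, hxk⟩ := hδ x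
  exact ⟨M k, mem_image_of_mem M hk, hkM k hxk⟩

end Levels

theorem ProductivelyLindelofSp.isAlster_of_mk_le_continuum (hCH : (𝔠 : Cardinal.{v}) = ℵ₁)
    (h : ProductivelyLindelofSp X) {A : Type u} [Nonempty A] (hA : #A ≤ 𝔠) {e : X → A → Z}
    (he : IsInducing e) : IsAlster X := by
  obtain ⟨Ω, _, _, hΩ⟩ := exists_isOmegaOne.{u} hCH
  obtain ⟨r⟩ := hA.trans_eq hΩ.symm
  let pull (p : A → Z) : Ω → Z := p ∘ Function.invFun r
  let push (p : Ω → Z) : A → Z := p ∘ r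
  have hpull : Function.LeftInverse push pull := fun p => by
    simp only [pull, push, Function.comp_assoc, Function.invFun_comp r.injective, Function.comp_id]
  exact h.isAlster_of_isInducing hΩ
    ((hpull.isEmbedding (by fun_prop) (by fun_prop)).isInducing.comp he)

end Alster

section AlsterProduct

/-- The filter generated by the `Gδ` supersets of `K`; it is used to push a filter towards `K`
without losing closure under countable intersections. -/
def gδNhds {X : Type*} [TopologicalSpace X] (K : Set X) : Filter X where
  sets := {s | ∃ M, IsGδ M ∧ K ⊆ M ∧ M ⊆ s}
  univ_sets := ⟨Set.univ, .univ, subset_univ K, subset_rfl⟩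
  sets_of_superset := fun ⟨M, hM, hKM, hMs⟩ hst => ⟨M, hM, hKM, hMs.trans hst⟩
  inter_sets := fun ⟨M, hM, hKM, hMs⟩ ⟨N, hN, hKN, hNt⟩ =>
    ⟨M ∩ N, hM.inter hN, subset_inter hKM hKN, inter_subset_inter hMs hNt⟩

instance {X : Type*} [TopologicalSpace X] (K : Set X) : CountableInterFilter (gδNhds K) where
  countable_sInter_mem S hS hSK := by
    choose! M hM hKM hMs using hSK
    exact ⟨⋂ s ∈ S, M s, .biInter hS hM, subset_iInter₂ hKM,
      sInter_eq_biInter ▸ iInter₂_mono hMs⟩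

theorem gδNhds_le_nhdsSet {X : Type*} [TopologicalSpace X] (K : Set X) : gδNhds K ≤ 𝓝ˢ K :=
  (hasBasis_nhdsSet K).ge_iff.2 fun U hU => ⟨U, hU.1.isGδ, hU.2, subset_rfl⟩

theorem IsAlster.exists_isCompact_neBot {X Y : Type*} [TopologicalSpace X] (h : IsAlster X)
    (F : Filter Y) [F.NeBot] [CountableInterFilter F] (f : Y → X) :
    ∃ K, IsCompact K ∧ (F ⊓ (gδNhds K).comap f).NeBot := by
  by_contra! hK
  obtain ⟨𝒯, h𝒯, hc, hcover⟩ := h {M | IsGδ M ∧ (f ⁻¹' M)ᶜ ∈ F} (fun M hM => hM.1) fun K hKc => by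
    have hdisj : Disjoint F ((gδNhds K).comap f) := disjoint_iff.2 (by simpa using hK K hKc)
    obtain ⟨s, hs, t, ⟨u, ⟨M, hM, hKM, hMu⟩, hut⟩, hst⟩ := Filter.disjoint_iff.1 hdisj
    refine ⟨M, ⟨hM, Filter.mem_of_superset hs ?_⟩, hKM⟩
    exact (hst.mono_right ((preimage_mono hMu).trans hut)).subset_compl_right
  have hempty : ⋂ M ∈ 𝒯, (f ⁻¹' M)ᶜ ∈ F := (countable_bInter_mem hc).2 fun M hM => (h𝒯 hM).2
  rw [← compl_iUnion₂, ← preimage_iUnion₂, ← sUnion_eq_biUnion, hcover, preimage_univ,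
    compl_univ] at hempty
  exact Filter.empty_notMem F hempty

theorem exists_ultrafilter_le_nhds_of_le_nhdsSet {X : Type*} [TopologicalSpace X] {K : Set X}
    (hK : IsCompact K) {f : Ultrafilter X} (hf : (f : Filter X) ≤ 𝓝ˢ K) :
    ∃ x, (f : Filter X) ≤ 𝓝 x := by
  by_contra! h
  have hdisj : Disjoint (f : Filter X) (𝓝ˢ K) :=
    hK.disjoint_nhdsSet_right.2 fun x _ => Ultrafilter.disjoint_iff_not_le.2 (h x)
  exact Ultrafilter.disjoint_iff_not_le.1 hdisj hf

theorem lindelofSpace_pi_of_isAlster {X : ℕ → Type*} [∀ i, TopologicalSpace (X i)]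
    (h : ∀ i, IsAlster (X i)) : LindelofSpace (∀ i, X i) := by
  refine ⟨fun F hF hFc _ => ?_⟩
  choose K hK hKF using fun (i : ℕ)
      (E : {E : Filter (∀ i, X i) // E.NeBot ∧ CountableInterFilter E}) =>
    have := E.2.1
    have := E.2.2
    (h i).exists_isCompact_neBot E.1 (Function.eval i)
  let E (n : ℕ) : {E : Filter (∀ i, X i) // E.NeBot ∧ CountableInterFilter E} :=
    Nat.rec ⟨F, hF, hFc⟩ (fun i E => ⟨E.1 ⊓ (gδNhds (K i E)).comap (Function.eval i), hKF i E,
      have := E.2.2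
      inferInstance⟩) n
  have hE : Antitone fun n => (E n).1 := antitone_nat_of_succ_le fun n => inf_le_left
  have : (⨅ n, (E n).1).NeBot :=
    Filter.iInf_neBot_of_directed' hE.directed_ge fun n => (E n).2.1
  let f := Ultrafilter.of (⨅ n, (E n).1)
  have hfE (n : ℕ) : ↑f ≤ (E n).1 := (Ultrafilter.of_le _).trans (iInf_le _ n)
  have hfK (i : ℕ) : ↑(f.map (Function.eval i)) ≤ 𝓝ˢ (K i (E i)) :=
    (Filter.map_le_iff_le_comap.2 ((hfE (i + 1)).trans inf_le_right)).trans (gδNhds_le_nhdsSet _)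
  choose x hx using fun i => exists_ultrafilter_le_nhds_of_le_nhdsSet (hK i (E i)) (hfK i)
  have hfx : ↑f ≤ 𝓝 x := by
    rw [nhds_pi, Filter.le_pi]
    exact hx
  exact ⟨x, mem_univ x, Filter.neBot_of_le (le_inf hfx (hfE 0))⟩

end AlsterProduct

section CoordCozero

open unitInterval

/-- The preimage of an open subset of the Hilbert cube under a product of maps into the unit
interval. These sets are used as basic open sets of `ℕ → X`, because only as many of them as
there are continuous functions on `X` have to be considered. -/
def IsCoordCozero {X : Type*} [TopologicalSpace X] (U : Set (ℕ → X)) : Prop :=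
  ∃ (ψ : ℕ → C(X, I)) (V : TopologicalSpace.Opens (ℕ → I)), U = {z | (fun n => ψ n (z n)) ∈ V}

variable {X : Type u} [TopologicalSpace X]

theorem lindelofSpace_of_isTopologicalBasis {B : Set (Set X)}
    (hB : TopologicalSpace.IsTopologicalBasis B)
    (h : ∀ 𝒰 ⊆ B, ⋃₀ 𝒰 = Set.univ → ∃ 𝒯 ⊆ 𝒰, 𝒯.Countable ∧ ⋃₀ 𝒯 = Set.univ) :
    LindelofSpace X := by
  refine quasiLindelofSp_iff_lindelofSpace.1 fun 𝒲 h𝒲 h𝒲cover => ?_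
  obtain ⟨𝒯, h𝒯, hc, hcover⟩ := h {b ∈ B | ∃ W ∈ 𝒲, b ⊆ W} (sep_subset _ _) <|
    eq_univ_of_forall fun x => by
      obtain ⟨W, hW, hxW⟩ := mem_sUnion.1 (h𝒲cover ▸ mem_univ x)
      obtain ⟨b, hb, hxb, hbW⟩ := hB.exists_subset_of_mem_open hxW (h𝒲 W hW)
      exact ⟨b, ⟨hb, W, hW, hbW⟩, hxb⟩
  choose! W hW hbW using fun b (hb : b ∈ 𝒯) => (h𝒯 hb).2
  refine ⟨W '' 𝒯, image_subset_iff.2 hW, hc.image W, univ_subset_iff.1 ?_⟩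
  rw [← hcover, sUnion_image, sUnion_eq_biUnion]
  exact iUnion₂_mono hbW

theorem IsCoordCozero.isOpen {U : Set (ℕ → X)} (hU : IsCoordCozero U) : IsOpen U := by
  obtain ⟨ψ, V, rfl⟩ := hU
  exact V.isOpen.preimage (continuous_pi fun n => (ψ n).continuous.comp (continuous_apply n))

theorem IsCoordCozero.preimage_comp {Y : Type*} [TopologicalSpace Y] {U : Set (ℕ → X)}
    (hU : IsCoordCozero U) (g : C(Y, X)) : IsCoordCozero ((g ∘ ·) ⁻¹' U) := by
  obtain ⟨ψ, V, rfl⟩ := hU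
  exact ⟨fun n => (ψ n).comp g, V, rfl⟩

theorem isTopologicalBasis_isCoordCozero [CompletelyRegularSpace X] :
    TopologicalSpace.IsTopologicalBasis {U : Set (ℕ → X) | IsCoordCozero U} := by
  refine TopologicalSpace.isTopologicalBasis_of_isOpen_of_nhds (fun U hU => hU.isOpen) ?_
  intro z W hz hW
  obtain ⟨F, V, hV, hVW⟩ := isOpen_pi_iff.1 hW z hz
  have hf (n : ℕ) : ∃ f : C(X, I), n ∈ F → f (z n) = 0 ∧ ∀ x, f x ≠ 1 → x ∈ V n := by
    by_cases hn : n ∈ F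
    · obtain ⟨f, hfc, hf0, hf1⟩ := CompletelyRegularSpace.completely_regular_isOpen (z n) (V n)
        (hV n hn).1 (hV n hn).2
      exact ⟨⟨f, hfc⟩, fun _ => ⟨hf0, fun x => not_imp_comm.1 fun hx => hf1 hx⟩⟩
    · exact ⟨.const X 0, fun hn' => absurd hn' hn⟩
  choose f hf using hf
  let B : TopologicalSpace.Opens (ℕ → I) :=
    ⟨Set.pi F fun _ => {1}ᶜ, isOpen_set_pi F.finite_toSet fun _ _ => isOpen_compl_singleton⟩
  refine ⟨{y | (fun n => f n (y n)) ∈ B}, ⟨f, B, rfl⟩, fun n hn => ?_,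
    fun y hy => hVW fun n hn => ?_⟩
  · exact (hf n hn).1.trans_ne zero_ne_one
  · exact (hf n hn).2 _ (hy n hn)

theorem mk_continuousMap_le_continuum [TopologicalSpace.SeparableSpace X] {Y : Type v}
    [TopologicalSpace Y] [T2Space Y] (hY : #Y ≤ 𝔠) : #C(X, Y) ≤ 𝔠 := by
  obtain ⟨s, hs, hd⟩ := TopologicalSpace.exists_countable_dense X
  have hinj : Function.Injective fun (f : C(X, Y)) (x : s) => f x := fun f g hfg =>
    DFunLike.coe_injective (Continuous.ext_on hd f.continuous g.continuous fun x hx =>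
      congrFun hfg ⟨x, hx⟩)
  calc #C(X, Y) ≤ #(s → Y) := mk_le_of_injective hinj
    _ = lift.{u} #Y ^ lift.{v} #s := by rw [mk_pi, prod_const]
    _ ≤ 𝔠 ^ lift.{v} #s := power_le_power_right (by simpa using hY)
    _ ≤ 𝔠 ^ ℵ₀ := power_le_power_left continuum_ne_zero (by simpa using hs.le_aleph0)
    _ = 𝔠 := continuum_power_aleph0

theorem mk_isCoordCozero_le_continuum [TopologicalSpace.SeparableSpace X] :
    #{U : Set (ℕ → X) // IsCoordCozero U} ≤ 𝔠 := by
  have hI : #C(X, I) ≤ 𝔠 := mk_continuousMap_le_continuum ((mk_subtype_le _).trans mk_real.le)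
  have hsurj : Function.Surjective
      fun p : (ℕ → C(X, I)) × TopologicalSpace.Opens (ℕ → I) =>
        (⟨{z | (fun n => p.1 n (z n)) ∈ p.2}, p.1, p.2, rfl⟩ : {U // IsCoordCozero U}) := by
    rintro ⟨_, ψ, V, rfl⟩
    exact ⟨(ψ, V), rfl⟩
  calc #{U : Set (ℕ → X) // IsCoordCozero U}
      ≤ #((ℕ → C(X, I)) × TopologicalSpace.Opens (ℕ → I)) := mk_le_of_surjective hsurj
    _ = #C(X, I) ^ ℵ₀ * lift.{u} #(TopologicalSpace.Opens (ℕ → I)) := by simp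
    _ ≤ 𝔠 ^ ℵ₀ * 𝔠 := mul_le_mul' (power_le_power_right hI)
        (lift_le_continuum.2 (mk_opens_le_continuum _))
    _ = 𝔠 := by rw [continuum_power_aleph0, continuum_mul_self]

theorem ProductivelyLindelofSp.exists_countable_iUnion_eq_univ (hCH : (𝔠 : Cardinal.{v}) = ℵ₁)
    (h : ProductivelyLindelofSp X) {κ : Type u} (hκ : #κ ≤ 𝔠) {U : κ → Set (ℕ → X)}
    (hU : ∀ k, IsCoordCozero (U k)) (hcover : ⋃ k, U k = Set.univ) :
    ∃ T : Set κ, T.Countable ∧ ⋃ k ∈ T, U k = Set.univ := by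
  choose ψ V hψV using hU
  rcases isEmpty_or_nonempty κ with hκ' | hκ'
  · exact ⟨∅, countable_empty, by simpa using hcover⟩
  let e (x : X) (p : κ × ℕ) : I := ψ p.1 p.2 x
  have he : Continuous e := continuous_pi fun p => (ψ p.1 p.2).continuous
  have hY : ProductivelyLindelofSp (range e) :=
    h.of_surjective he.rangeFactorization rangeFactorization_surjective
  have hA : #(κ × ℕ) ≤ 𝔠 := by
    rw [mk_prod, lift_uzero, mk_nat, lift_aleph0]
    exact (mul_le_mul' hκ aleph0_le_continuum).trans continuum_mul_self.le
  have : LindelofSpace (ℕ → range e) := lindelofSpace_pi_of_isAlster fun _ =>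
    hY.isAlster_of_mk_le_continuum hCH hA IsInducing.subtypeVal
  let W (k : κ) : Set (ℕ → range e) := {y | (fun n => (y n).1 (k, n)) ∈ V k}
  have hW (k : κ) : IsOpen (W k) := (V k).isOpen.preimage <|
    continuous_pi fun n => (continuous_apply (k, n)).comp
      (continuous_subtype_val.comp (continuous_apply n))
  have hWU (k : κ) : (rangeFactorization e ∘ ·) ⁻¹' W k = U k := (hψV k).symm
  have hsurj : Function.Surjective ((rangeFactorization e ∘ ·) : (ℕ → X) → ℕ → range e) :=
    rangeFactorization_surjective.comp_left
  have hWcover : ⋃ k, W k = Set.univ := hsurj.preimage_injective <| by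
    rw [preimage_iUnion, iUnion_congr hWU, hcover, preimage_univ]
  obtain ⟨T, hT, hTcover⟩ := isLindelof_univ.elim_countable_subcover W hW hWcover.ge
  refine ⟨T, hT, ?_⟩
  rw [← iUnion₂_congr fun k _ => hWU k, ← preimage_iUnion₂, univ_subset_iff.1 hTcover,
    preimage_univ]

theorem ProductivelyLindelofSp.exists_countable_subset_pi_subset_sUnion
    (hCH : (𝔠 : Cardinal.{v}) = ℵ₁) (h : ProductivelyLindelofSp X) {F : Set X} (hF : IsClosed F)
    {𝒰 : Set (Set (ℕ → X))} (h𝒰 : ∀ U ∈ 𝒰, IsCoordCozero U) (hcard : #𝒰 ≤ 𝔠)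
    (hcover : Set.univ.pi (fun _ => F) ⊆ ⋃₀ 𝒰) :
    ∃ 𝒯 ⊆ 𝒰, 𝒯.Countable ∧ Set.univ.pi (fun _ => F) ⊆ ⋃₀ 𝒯 := by
  let ι : C(F, X) := .restrict F (.id X)
  obtain ⟨T, hT, hTcover⟩ := (h.of_isClosed hF).exists_countable_iUnion_eq_univ hCH hcard
    (fun U : 𝒰 => (h𝒰 U U.2).preimage_comp ι) (eq_univ_of_forall fun z => by
      obtain ⟨U, hU, hzU⟩ := hcover fun n (_ : n ∈ Set.univ) => (z n).2
      exact mem_iUnion.2 ⟨⟨U, hU⟩, hzU⟩)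
  refine ⟨Subtype.val '' T, image_subset_iff.2 fun U _ => U.2, hT.image _, fun z hz => ?_⟩
  obtain ⟨U, hU, hzU⟩ := mem_iUnion₂.1 (hTcover ▸ mem_univ fun n => (⟨z n, hz n trivial⟩ : F))
  exact ⟨U, mem_image_of_mem _ hU, hzU⟩

theorem ProductivelyLindelofSp.lindelofSpace_pi_of_separableSpace
    (hCH : (𝔠 : Cardinal.{v}) = ℵ₁) (h : ProductivelyLindelofSp X)
    [TopologicalSpace.SeparableSpace X] : LindelofSpace (ℕ → X) := by
  have := h.t3Space
  have := h.lindelofSpace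
  refine lindelofSpace_of_isTopologicalBasis isTopologicalBasis_isCoordCozero
    fun 𝒰 h𝒰 hcover => ?_
  simpa using h.exists_countable_subset_pi_subset_sUnion hCH isClosed_univ h𝒰
    ((mk_le_mk_of_subset h𝒰).trans mk_isCoordCozero_le_continuum) (by simpa using hcover)

theorem ProductivelyLindelofSp.isLindelof_pi (hCH : (𝔠 : Cardinal.{v}) = ℵ₁)
    (h : ProductivelyLindelofSp X) {F : Set X} (hF : IsClosed F)
    [TopologicalSpace.SeparableSpace F] : IsLindelof (Set.univ.pi fun _ : ℕ => F) := by
  have := (h.of_isClosed hF).lindelofSpace_pi_of_separableSpace hCH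
  have hrange : range (Pi.map fun (_ : ℕ) (x : F) => (x : X)) = Set.univ.pi fun _ => F := by
    simp only [range_piMap, Subtype.range_coe]
  exact hrange ▸ isLindelof_range (.piMap fun _ => continuous_subtype_val)

theorem separableSpace_closure_range (a : ℕ → X) :
    TopologicalSpace.SeparableSpace (closure (range a)) := by
  refine .of_denseRange (fun n => ⟨a n, subset_closure (mem_range_self n)⟩) ?_
  rw [DenseRange, Subtype.dense_iff, ← range_comp]
  exact subset_rfl

end CoordCozero

section Reflection

theorem exists_mk_le_continuum_closed_under {X : Type u} [Nonempty X] {ι : Type v} (hι : #ι ≤ 𝔠)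
    (f : ι → (ℕ → X) → X) :
    ∃ S : Set X, S.Nonempty ∧ #S ≤ 𝔠 ∧ ∀ i (b : ℕ → X), (∀ n, b n ∈ S) → f i b ∈ S := by
  obtain ⟨x₀⟩ := ‹Nonempty X›
  let arity (o : Option ι) : Type := {_n : ℕ // o.isSome}
  let eval : WType arity → X := WType.elim X fun
    | ⟨none, _⟩ => x₀
    | ⟨some i, b⟩ => f i fun n => b ⟨n, rfl⟩
  have hW : #(WType arity) ≤ 𝔠 := by
    refine WType.cardinalMk_le_of_le' ?_
    calc Cardinal.sum (fun o : Option ι => (𝔠 : Cardinal.{v}) ^ lift.{v} #(arity o))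
        ≤ Cardinal.sum fun _ : Option ι => 𝔠 := Cardinal.sum_le_sum _ _ fun o =>
          (power_le_power_left continuum_ne_zero (lift_le_aleph0.2 mk_le_aleph0)).trans
            continuum_power_aleph0.le
      _ = #(Option ι) * 𝔠 := sum_const' _ _
      _ ≤ 𝔠 * 𝔠 := mul_le_mul' (mk_option.trans_le
          (add_le_of_le aleph0_le_continuum hι (one_le_aleph0.trans aleph0_le_continuum))) le_rfl
      _ = 𝔠 := continuum_mul_self
  refine ⟨range eval, ⟨x₀, .mk none fun n => absurd n.2 Bool.false_ne_true, rfl⟩, ?_, ?_⟩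
  · rw [← lift_le_continuum.{u, v}]
    exact mk_range_le_lift.trans (lift_le_continuum.2 hW)
  · intro i b hb
    choose w hw using hb
    exact ⟨.mk (some i) fun n => w n, congrArg (f i) (funext hw)⟩

variable {X : Type u} [TopologicalSpace X]

theorem CountableTightness.exists_seq_mem_closure_range (ht : CountableTightness X) {S : Set X}
    (hS : S.Nonempty) {z : ℕ → X} (hz : ∀ n, z n ∈ closure S) :
    ∃ a : ℕ → S, ∀ n, z n ∈ closure (range fun i => (a i : X)) := by
  have := hS.to_subtype
  choose B hBS hB hzB using fun n => ht S (z n) (hz n)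
  obtain ⟨a, ha⟩ := countable_iff_exists_subset_range.1
    ((countable_iUnion hB).preimage Subtype.val_injective (s := ⋃ n, B n) (f := ((↑) : S → X)))
  refine ⟨a, fun n => closure_mono (fun x hx => ?_) (hzB n)⟩
  obtain ⟨i, hi⟩ := ha (show (⟨x, hBS n hx⟩ : S) ∈ _ from mem_iUnion.2 ⟨n, hx⟩)
  exact ⟨i, congrArg Subtype.val hi⟩

theorem exists_seq_subset_iUnion_of_countable {α ι : Type*} [Nonempty ι] {T : Set α}
    (hT : T.Countable) {A : ι → Set α} (h : T ⊆ ⋃ i, A i) : ∃ c : ℕ → ι, T ⊆ ⋃ n, A (c n) := by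
  choose! g hg using fun x (hx : x ∈ T) => mem_iUnion.1 (h hx)
  obtain ⟨c, hc⟩ := countable_iff_exists_subset_range.1 (hT.image g)
  refine ⟨c, fun x hx => ?_⟩
  obtain ⟨n, hn⟩ := hc (mem_image_of_mem g hx)
  exact mem_iUnion.2 ⟨n, hn ▸ hg x hx⟩

theorem CountableTightness.exists_countable_sUnion_eq_univ (ht : CountableTightness X)
    {𝒰 : Set (Set (ℕ → X))} (h𝒰 : ∀ U ∈ 𝒰, IsOpen U) (hcover : ⋃₀ 𝒰 = Set.univ)
    (hsep : ∀ a : ℕ → X, IsLindelof (Set.univ.pi fun _ : ℕ => closure (range a)))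
    (hsmall : ∀ F : Set X, IsClosed F → ∀ 𝒱 ⊆ 𝒰, #𝒱 ≤ 𝔠 → Set.univ.pi (fun _ => F) ⊆ ⋃₀ 𝒱 →
      ∃ 𝒯 ⊆ 𝒱, 𝒯.Countable ∧ Set.univ.pi (fun _ => F) ⊆ ⋃₀ 𝒯) :
    ∃ 𝒯 ⊆ 𝒰, 𝒯.Countable ∧ ⋃₀ 𝒯 = Set.univ := by
  rcases isEmpty_or_nonempty X with hX | hX
  · exact ⟨∅, empty_subset _, countable_empty, Subsingleton.elim _ _⟩
  choose T hT𝒰 hTc hT using fun a => (hsep a).elim_countable_subcover_image (c := id) h𝒰 <|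
    (subset_univ _).trans_eq (hcover.symm.trans sUnion_eq_biUnion)
  by_contra! hno
  have hmiss (c : ℕ → ℕ → X) : ∃ p, p ∉ ⋃₀ ⋃ n, T (c n) := by
    have hne := hno (⋃ n, T (c n)) (iUnion_subset fun n => hT𝒰 _) (countable_iUnion fun n => hTc _)
    simpa [eq_univ_iff_forall] using hne
  choose p hp using hmiss
  obtain ⟨S, hS, hScard, hSclosed⟩ := exists_mk_le_continuum_closed_under (ι := ℕ)
    (mk_nat.trans_le aleph0_le_continuum) fun j b => p (fun n i => b (Nat.pair n i)) j
  have := hS.to_subtype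
  let A (a : ℕ → S) : Set (Set (ℕ → X)) := T fun i => a i
  have hA : Set.univ.pi (fun _ => closure S) ⊆ ⋃₀ ⋃ a, A a := fun z hz => by
    obtain ⟨a, ha⟩ := ht.exists_seq_mem_closure_range hS fun n => hz n trivial
    obtain ⟨U, hU, hzU⟩ := mem_iUnion₂.1 (hT _ fun n _ => ha n)
    exact ⟨U, mem_iUnion.2 ⟨a, hU⟩, hzU⟩
  have hAcard : #(⋃ a, A a) ≤ 𝔠 := by
    calc #(⋃ a, A a) ≤ #(ℕ → S) * ⨆ a, #(A a) := mk_iUnion_le A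
      _ ≤ 𝔠 * 𝔠 := mul_le_mul' (by simpa using power_le_power_right (c := ℵ₀) hScard)
          (ciSup_le' fun a => (hTc _).le_aleph0.trans aleph0_le_continuum)
      _ = 𝔠 := continuum_mul_self
  obtain ⟨𝒯, h𝒯, h𝒯c, h𝒯cover⟩ := hsmall (closure S) isClosed_closure (⋃ a, A a)
    (iUnion_subset fun a => hT𝒰 _) hAcard hA
  obtain ⟨c, hc⟩ := exists_seq_subset_iUnion_of_countable h𝒯c h𝒯
  refine hp (fun n i => c n i) (sUnion_mono hc (h𝒯cover fun j _ => subset_closure ?_))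
  simpa using hSclosed j (fun m => c m.unpair.1 m.unpair.2) fun m => (c _ _).2

end Reflection

/-- Under CH, every productively Lindelöf space of countable
tightness is powerfully Lindelöf. -/
theorem stmt0 (hCH : Cardinal.continuum = Cardinal.aleph 1)
    (X : Type u) [TopologicalSpace X]
    (hprod : ProductivelyLindelofSp X) (ht : CountableTightness X) :
    PowerfullyLindelofSp X := by
  have := hprod.t3Space
  have := hprod.lindelofSpace
  refine engLindelofSp_iff.2 ⟨inferInstance, ?_⟩
  refine lindelofSpace_of_isTopologicalBasis isTopologicalBasis_isCoordCozero
    fun 𝒰 h𝒰 hcover => ?_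
  refine ht.exists_countable_sUnion_eq_univ (fun U hU => (h𝒰 hU).isOpen) hcover (fun a => ?_)
    fun F hF 𝒱 h𝒱 hcard hF𝒱 => ?_
  · have := separableSpace_closure_range a
    exact hprod.isLindelof_pi hCH isClosed_closure
  · exact hprod.exists_countable_subset_pi_subset_sUnion hCH hF (h𝒱.trans h𝒰) hcard hF𝒱
end

section
/- Assume the Continuum Hypothesis. If X is a productively Lindelöf topological space with weight w(X) ≤ 𝔠, then X is powerfully Lindelöf. -/
open Set Cardinal Topology

universe u v

/-!
By CH, the space `X` embeds in a cube whose coordinates are well-ordered in type `ω₁`.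

Productivity gives Alster's property. Let `Z` enumerate closed sets depending on countably many
coordinates such that each compact subset of `X` lies in some `Z β`. Diagonalizing yields a Lindelöf
subset `L` of the cube, disjoint from `X`, such that for every open `O` around `L` countably many
`Z β` cover `X \ O`. If no countable subfamily covered `X`, then choosing points outside the sets
enumerated so far would give an uncountable `A ⊆ X` concentrated on `L`. Isolating the points of `A`
keeps `L ∪ A` Lindelöf, as in Michael's line, but its product with `X` is not: the diagonal of `A`
is an uncountable closed discrete subset.

Alster's property makes `X ^ ω` Lindelöf. Otherwise the complements of countable unions of members
of some open cover generate a proper σ-complete filter. Alster's property provides compact sets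
`K 0, K 1, …` one at a time such that no `Gδ` box around `K 0 × ⋯ × K n` is null for this filter.
But `∏ i, K i` is compact and, by the tube lemma, has a basis of open boxes, one of which is null.
-/

section ContinuumOrder

/-- A well-order of cardinality `𝔠` with countable initial segments, that is, of order type `ω₁`.
Such an order exists if and only if CH holds, and it indexes all transfinite constructions below. -/
class ContinuumOrder (Ω : Type u) [LinearOrder Ω] : Prop extends WellFoundedLT Ω where
  mk_eq_continuum : #Ω = 𝔠
  countable_Iio (a : Ω) : Countable (Iio a)

attribute [instance] ContinuumOrder.countable_Iio

theorem continuum_eq_aleph_one_of_univ (hCH : (𝔠 : Cardinal.{v}) = ℵ₁) :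
    (𝔠 : Cardinal.{u}) = ℵ₁ := by
  apply lift_injective.{v}
  rw [lift_continuum, lift_aleph, ← lift_continuum.{u, v}, hCH, lift_aleph, Ordinal.lift_one,
    Ordinal.lift_one]

theorem exists_continuumOrder (hCH : (𝔠 : Cardinal.{u}) = ℵ₁) :
    ∃ (Ω : Type u) (_ : LinearOrder Ω), ContinuumOrder Ω := by
  refine ⟨(ℵ₁ : Cardinal.{u}).ord.ToType, inferInstance, ?_⟩
  exact
    { mk_eq_continuum := by rw [mk_toType, card_ord, hCH]
      countable_Iio := fun a => by
        rw [← mk_le_aleph0_iff, ← Order.lt_succ_iff, succ_aleph0]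
        exact (mk_Iio_lt a (by simp)).trans_eq (by simp) }

namespace ContinuumOrder

variable {Ω : Type u} [LinearOrder Ω] [ContinuumOrder Ω]

variable (Ω) in
theorem exists_surjective {T : Type u} [Nonempty T] (hT : #T ≤ 𝔠) :
    ∃ f : Ω → T, Function.Surjective f := by
  obtain ⟨g, hg⟩ : Nonempty (T ↪ Ω) := by rwa [← Cardinal.le_def, mk_eq_continuum (Ω := Ω)]
  exact ⟨Function.invFun g, Function.invFun_surjective hg⟩

variable (Ω) in
theorem uncountable : Uncountable Ω := by
  rw [← aleph0_lt_mk_iff, mk_eq_continuum]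
  exact aleph0_lt_continuum

theorem countable_Iic (a : Ω) : (Iic a).Countable := by
  rw [← Iio_insert]
  exact (to_countable (Iio a)).insert a

theorem exists_forall_lt {S : Set Ω} (hS : S.Countable) : ∃ b, ∀ s ∈ S, s < b := by
  have := uncountable Ω
  have hIic : (⋃ s ∈ S, Iic s).Countable := hS.biUnion fun s _ => countable_Iic s
  obtain ⟨b, hb⟩ := (ne_univ_iff_exists_notMem _).1 fun h =>
    not_countable_univ (α := Ω) (h ▸ hIic)
  exact ⟨b, fun s hs => not_le.1 fun h => hb (mem_biUnion hs h)⟩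

theorem exists_forall_lt_map_lt (F : Ω → Ω) : ∃ γ, (Iio γ).Nonempty ∧ ∀ α < γ, F α < γ := by
  have hstep (a : Ω) : ∃ b, ∀ α ≤ a, F α < b := by
    obtain ⟨b, hb⟩ := exists_forall_lt ((countable_Iic a).image F)
    exact ⟨b, fun α hα => hb _ ⟨α, hα, rfl⟩⟩
  choose g hFg using hstep
  have := uncountable Ω
  obtain ⟨a⟩ : Nonempty Ω := inferInstance
  let γ₀ (n : ℕ) : Ω := g^[n] a
  have hγ₀ (n : ℕ) : γ₀ (n + 1) = g (γ₀ n) := Function.iterate_succ_apply' g n a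
  obtain ⟨γ, hγ, hmin⟩ := WellFounded.has_min wellFounded_lt {b | ∀ n, γ₀ n < b} <| by
    obtain ⟨b, hb⟩ := exists_forall_lt (countable_range γ₀)
    exact ⟨b, fun n => hb _ ⟨n, rfl⟩⟩
  refine ⟨γ, ⟨a, hγ 0⟩, fun α hα => ?_⟩
  obtain ⟨n, hn⟩ : ∃ n, α ≤ γ₀ n := by
    by_contra! h
    exact hmin α h hα
  calc F α < g (γ₀ n) := hFg _ α hn
    _ = γ₀ (n + 1) := (hγ₀ n).symm
    _ < γ := hγ _

end ContinuumOrder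

end ContinuumOrder

section CountableCovers

variable {B : Type u} {L : Set B} {𝒞 : Set (Set B)}

/-- Countably many members of the family `𝒞` cover the set `L`. -/
def CountablyCoveredBy (L : Set B) (𝒞 : Set (Set B)) : Prop :=
  ∃ 𝒱 ⊆ 𝒞, 𝒱.Countable ∧ L ⊆ ⋃₀ 𝒱

/-- The filter of the sets whose complement is covered by countably many members of `𝒞`. -/
def coveringFilter (𝒞 : Set (Set B)) : Filter B :=
  Filter.countableGenerate (compl '' 𝒞)

instance (𝒞 : Set (Set B)) : CountableInterFilter (coveringFilter 𝒞) :=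
  inferInstanceAs (CountableInterFilter (Filter.countableGenerate _))

theorem mem_coveringFilter {S : Set B} : S ∈ coveringFilter 𝒞 ↔ CountablyCoveredBy Sᶜ 𝒞 := by
  rw [coveringFilter, Filter.mem_countableGenerate_iff]
  constructor
  · rintro ⟨𝒯, h𝒯, hc, hS⟩
    refine ⟨compl '' 𝒯, ?_, hc.image _, ?_⟩
    · rintro _ ⟨T, hT, rfl⟩
      obtain ⟨C, hC, rfl⟩ := h𝒯 hT
      rwa [compl_compl]
    · rwa [← compl_sInter, compl_subset_compl]
  · rintro ⟨𝒱, h𝒱, hc, hS⟩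
    refine ⟨compl '' 𝒱, image_mono h𝒱, hc.image _, ?_⟩
    rwa [← compl_sUnion, compl_subset_comm]

theorem compl_mem_coveringFilter : Lᶜ ∈ coveringFilter 𝒞 ↔ CountablyCoveredBy L 𝒞 := by
  rw [mem_coveringFilter, compl_compl]

theorem coveringFilter_eq_bot : coveringFilter 𝒞 = ⊥ ↔ CountablyCoveredBy Set.univ 𝒞 := by
  rw [← Filter.empty_mem_iff_bot, ← compl_univ, compl_mem_coveringFilter]

theorem compl_mem_coveringFilter_of_mem {C : Set B} (hC : C ∈ 𝒞) : Cᶜ ∈ coveringFilter 𝒞 :=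
  Filter.CountableGenerateSets.basic (mem_image_of_mem _ hC)

theorem countablyCoveredBy_range {ι : Type*} {G : ι → Set B} :
    CountablyCoveredBy L (range G) ↔ ∃ T : Set ι, T.Countable ∧ L ⊆ ⋃ i ∈ T, G i := by
  constructor
  · rintro ⟨𝒱, h𝒱, hc, hL⟩
    have := hc.to_subtype
    choose i hi using fun V : 𝒱 => h𝒱 V.2
    refine ⟨range i, countable_range i, ?_⟩
    rwa [biUnion_range, iUnion_congr hi, ← sUnion_eq_iUnion]
  · rintro ⟨T, hT, hL⟩
    exact ⟨G '' T, image_subset_range G T, hT.image G, by rwa [sUnion_image]⟩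

namespace CountablyCoveredBy

theorem of_mem {C : Set B} (hC : C ∈ 𝒞) (hL : L ⊆ C) : CountablyCoveredBy L 𝒞 :=
  ⟨{C}, singleton_subset_iff.2 hC, countable_singleton C, by rwa [sUnion_singleton]⟩

theorem mono_left {L' : Set B} (h : CountablyCoveredBy L 𝒞) (hL : L' ⊆ L) :
    CountablyCoveredBy L' 𝒞 := by
  obtain ⟨𝒱, h𝒱, hc, hcov⟩ := h
  exact ⟨𝒱, h𝒱, hc, hL.trans hcov⟩

theorem trans {𝒱 : Set (Set B)} (hL : CountablyCoveredBy L 𝒱)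
    (h𝒱 : ∀ V ∈ 𝒱, CountablyCoveredBy (V ∩ L) 𝒞) : CountablyCoveredBy L 𝒞 := by
  obtain ⟨𝒲, h𝒲, hc, hcov⟩ := hL
  rw [← compl_mem_coveringFilter]
  have hW : ∀ W ∈ 𝒲, (W ∩ L)ᶜ ∈ coveringFilter 𝒞 :=
    fun W hW => compl_mem_coveringFilter.2 (h𝒱 W (h𝒲 hW))
  filter_upwards [(countable_bInter_mem hc).2 hW] with b hb hbL
  obtain ⟨W, hW, hbW⟩ := hcov hbL
  exact mem_iInter₂.1 hb W hW ⟨hbW, hbL⟩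

end CountablyCoveredBy

variable [TopologicalSpace B]

theorem isLindelof_iff_countablyCoveredBy :
    IsLindelof L ↔ ∀ 𝒰 : Set (Set B), (∀ U ∈ 𝒰, IsOpen U) → L ⊆ ⋃₀ 𝒰 →
      CountablyCoveredBy L 𝒰 := by
  refine ⟨fun hL 𝒰 hU hc => ?_, fun h => isLindelof_of_countable_subcover fun U hU hc => ?_⟩
  · obtain ⟨𝒱, h𝒱, hcount, hcov⟩ := hL.elim_countable_subcover_image (b := 𝒰) (c := id) hU
      (by rwa [sUnion_eq_biUnion] at hc)
    exact ⟨𝒱, h𝒱, hcount, by rwa [sUnion_eq_biUnion]⟩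
  · exact countablyCoveredBy_range.1 (h (range U) (forall_mem_range.2 hU) (by rwa [sUnion_range]))

theorem quasiLindelofSp_iff_lindelofSpace_s1 : QuasiLindelofSp B ↔ LindelofSpace B := by
  rw [← isLindelof_univ_iff, isLindelof_iff_countablyCoveredBy]
  simp only [QuasiLindelofSp, CountablyCoveredBy, univ_subset_iff]

theorem engLindelofSp_iff_s1 : EngLindelofSp B ↔ T3Space B ∧ LindelofSpace B := by
  rw [EngLindelofSp, quasiLindelofSp_iff_lindelofSpace_s1, ← and_assoc]
  exact and_congr_left fun _ => ⟨fun ⟨_, _⟩ => {}, fun _ => ⟨inferInstance, inferInstance⟩⟩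

end CountableCovers

section Concentrated

variable {B : Type u} {L A : Set B}

open Classical in
/-- The map into `B × 2^A` that records in coordinate `a` whether a point equals `a`. It
embeds a version of the Michael line: the points of `A` become isolated in the image of `isolate A`,
and the neighbourhoods of the other points lose only finitely many points of `A`. -/
noncomputable def isolate (A : Set B) (b : B) : B × (A → Bool) :=
  (b, fun a => decide (b = a))

theorem isolate_snd_apply_eq_true {b : B} {a : A} : (isolate A b).2 a = true ↔ b = a := by
  simp [isolate]

theorem isolate_snd_apply_eq_false {b : B} {a : A} : (isolate A b).2 a = false ↔ b ≠ a := by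
  simp [isolate]

theorem isolate_of_notMem {y : B} (hy : y ∉ A) : isolate A y = (y, fun _ => false) :=
  Prod.ext rfl <| funext fun a => isolate_snd_apply_eq_false.2 fun h => hy (h ▸ a.2)

variable [TopologicalSpace B]

/-- The set `A` is concentrated on the set `L`: every open set around `L` contains all but countably
many points of `A`. -/
def ConcentratedOn (A L : Set B) : Prop :=
  ∀ O, IsOpen O → L ⊆ O → (A \ O).Countable

theorem isLindelof_union_of_concentratedOn (hL : IsLindelof L) (hA : ConcentratedOn A L) :
    IsLindelof (L ∪ A) := by
  refine isLindelof_iff_countablyCoveredBy.2 fun 𝒰 hU hcov => ?_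
  obtain ⟨hLU, hAU⟩ := union_subset_iff.1 hcov
  obtain ⟨𝒱, h𝒱, h𝒱c, hL𝒱⟩ := isLindelof_iff_countablyCoveredBy.1 hL 𝒰 hU hLU
  have hrest : (A \ ⋃₀ 𝒱).Countable := hA _ (isOpen_sUnion fun V hV => hU V (h𝒱 hV)) hL𝒱
  obtain ⟨𝒲, h𝒲, h𝒲c, hA𝒲⟩ :=
    isLindelof_iff_countablyCoveredBy.1 hrest.isLindelof 𝒰 hU (sdiff_subset.trans hAU)
  refine ⟨𝒱 ∪ 𝒲, union_subset h𝒱 h𝒲, h𝒱c.union h𝒲c, ?_⟩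
  rw [sUnion_union]
  exact union_subset (hL𝒱.trans subset_union_left) (sdiff_subset_iff.1 hA𝒲)

theorem isLindelof_image_isolate (hL : IsLindelof L) (hLA : Disjoint L A) :
    IsLindelof (isolate A '' L) := by
  rw [image_congr fun y hy => isolate_of_notMem (disjoint_left.1 hLA hy)]
  exact hL.image (by fun_prop)

theorem exists_isOpen_isolate_mem {O : Set (B × (A → Bool))} (hO : IsOpen O) {y : B}
    (hyA : y ∉ A) (hy : isolate A y ∈ O) :
    ∃ U F : Set B, IsOpen U ∧ y ∈ U ∧ F.Countable ∧ ∀ z ∈ U, z ∉ F → isolate A z ∈ O := by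
  rw [isolate_of_notMem hyA] at hy
  obtain ⟨U, W, hU, hW, hyU, hyW, hUW⟩ := isOpen_prod_iff.1 hO _ _ hy
  obtain ⟨s, u, hu, hus⟩ := isOpen_pi_iff.1 hW _ hyW
  refine ⟨U, Subtype.val '' (s : Set A), hU, hyU, (s.countable_toSet).image _,
    fun z hz hzs => hUW ⟨hz, hus fun a ha => ?_⟩⟩
  have hza : (isolate A z).2 a = false :=
    isolate_snd_apply_eq_false.2 fun h => hzs ⟨a, ha, h.symm⟩
  exact hza ▸ (hu a ha).2

theorem ConcentratedOn.image_isolate (hL : IsLindelof L) (hLA : Disjoint L A)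
    (hA : ConcentratedOn A L) : ConcentratedOn (isolate A '' A) (isolate A '' L) := by
  intro O hO hLO
  choose! U F hU hyU hF hUF using fun y (hy : y ∈ L) =>
    exists_isOpen_isolate_mem hO (disjoint_left.1 hLA hy) (hLO ⟨y, hy, rfl⟩)
  obtain ⟨S, hSL, hS, hLS⟩ := hL.elim_countable_subcover_image hU
    fun y hy => mem_biUnion hy (hyU y hy)
  have hrest : (A \ ⋃ y ∈ S, U y).Countable :=
    hA _ (isOpen_biUnion fun y hy => hU y (hSL hy)) hLS
  refine ((hrest.union (hS.biUnion fun y hy => hF y (hSL hy))).image (isolate A)).mono ?_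
  rintro _ ⟨⟨a, ha, rfl⟩, haO⟩
  refine ⟨a, ?_, rfl⟩
  by_contra h
  simp only [mem_union, mem_sdiff, ha, true_and, not_or, not_not, mem_iUnion] at h
  obtain ⟨⟨y, hy, hay⟩, haF⟩ := h
  exact haO (hUF y (hSL hy) a hay fun haFy => haF ⟨y, hy, haFy⟩)

variable {X : Type u} [TopologicalSpace X]

theorem ConcentratedOn.countable_of_productivelyQuasiLindelof [T3Space B]
    (hX : ProductivelyQuasiLindelofSp X) {i : X → B} (hi : Continuous i) (hL : IsLindelof L)
    (hLi : Disjoint L (range i)) (hAi : A ⊆ range i) (hA : ConcentratedOn A L) :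
    A.Countable := by
  have hLA : Disjoint L A := hLi.mono_right hAi
  let E : Set (B × (A → Bool)) := isolate A '' L ∪ isolate A '' A
  have hE : IsLindelof E :=
    isLindelof_union_of_concentratedOn (isLindelof_image_isolate hL hLA) (hA.image_isolate hL hLA)
  have hXE : LindelofSpace (X × E) := quasiLindelofSp_iff_lindelofSpace_s1.1 <|
    hX E (engLindelofSp_iff_s1.2 ⟨inferInstance, isLindelof_iff_lindelofSpace.1 hE⟩)
  let G : Option A → Set (X × E)
    | none => {p | i p.1 ≠ p.2.1.1}
    | some a => {p | p.2.1.2 a = true}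
  have hG : ∀ o, IsOpen (G o) := by
    rintro (_ | a)
    · exact isOpen_ne_fun (by fun_prop) (by fun_prop)
    · exact (isOpen_discrete {true}).preimage (f := fun p : X × E => p.2.1.2 a) (by fun_prop)
  have hcov : Set.univ ⊆ ⋃ o, G o := by
    rintro ⟨x, ⟨_, hbE⟩⟩ -
    rcases hbE with ⟨y, hy, rfl⟩ | ⟨a, ha, rfl⟩
    · exact mem_iUnion.2 ⟨none, fun h => disjoint_left.1 hLi hy ⟨x, h⟩⟩
    · exact mem_iUnion.2 ⟨some ⟨a, ha⟩, isolate_snd_apply_eq_true.2 rfl⟩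
  obtain ⟨r, hr, hrcov⟩ := hXE.isLindelof_univ.elim_countable_subcover G hG hcov
  refine ((hr.preimage (Option.some_injective _)).image Subtype.val).mono fun a ha => ?_
  obtain ⟨x, hx⟩ := hAi ha
  obtain ⟨o, ho, hoG⟩ := mem_iUnion₂.1 (hrcov (mem_univ (x, ⟨isolate A a, Or.inr ⟨a, ha, rfl⟩⟩)))
  rcases o with _ | a'
  · exact absurd hx hoG
  · exact ⟨a', ho, (isolate_snd_apply_eq_true.1 hoG).symm⟩

theorem countablyCoveredBy_range_of_productivelyQuasiLindelof
    {Ω : Type u} [LinearOrder Ω] [ContinuumOrder Ω] [T3Space B]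
    (hX : ProductivelyQuasiLindelofSp X) {i : X → B} (hi : Continuous i) (hL : IsLindelof L)
    (hLi : Disjoint L (range i)) {Z : Ω → Set B} (hZ : range i ⊆ ⋃ β, Z β)
    (hrest : ∀ O, IsOpen O → L ⊆ O → CountablyCoveredBy (range i \ O) (range Z)) :
    CountablyCoveredBy (range i) (range Z) := by
  by_contra hcon
  have hex (α : Ω) : ∃ x ∈ range i, x ∉ ⋃ β ∈ Iio α, Z β :=
    not_subset.1 fun h => hcon (countablyCoveredBy_range.2 ⟨_, to_countable _, h⟩)
  choose x hxi hxZ using hex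
  have hlt {α β : Ω} (h : x α ∈ Z β) : α ≤ β := not_lt.1 fun hβ => hxZ α (mem_biUnion hβ h)
  have hconc : ConcentratedOn (range x) L := by
    intro O hO hLO
    obtain ⟨T, hT, hcov⟩ := countablyCoveredBy_range.1 (hrest O hO hLO)
    obtain ⟨b, hb⟩ := ContinuumOrder.exists_forall_lt hT
    refine ((to_countable (Iio b)).image x).mono ?_
    rintro _ ⟨⟨α, rfl⟩, hα⟩
    obtain ⟨β, hβ, hαβ⟩ := mem_iUnion₂.1 (hcov ⟨hxi α, hα⟩)
    exact ⟨α, (hlt hαβ).trans_lt (hb β hβ), rfl⟩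
  have hcount : (range x).Countable := hconc.countable_of_productivelyQuasiLindelof hX hi hL hLi
    (range_subset_iff.2 hxi)
  have := ContinuumOrder.uncountable Ω
  choose! f hf using fun y (hy : y ∈ range i) => mem_iUnion.1 (hZ hy)
  obtain ⟨b, hb⟩ := ContinuumOrder.exists_forall_lt (hcount.image f)
  exact (hlt (hf (x b) (hxi b))).not_gt (hb _ ⟨x b, ⟨b, rfl⟩, rfl⟩)

end Concentrated

section SecondCountableImages

variable {M : Type u} [TopologicalSpace M] [SecondCountableTopology M]

theorem mk_isClosed_le_continuum : #{C : Set M | IsClosed C} ≤ 𝔠 := by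
  let b := TopologicalSpace.countableBasis M
  have hsub : {C : Set M | IsClosed C} ⊆ range fun s : Set b => (⋃₀ (Subtype.val '' s))ᶜ := by
    intro C hC
    obtain ⟨S, hS, hCS⟩ :=
      (TopologicalSpace.isBasis_countableBasis M).open_eq_sUnion hC.isOpen_compl
    refine ⟨Subtype.val ⁻¹' S, ?_⟩
    simp only [Subtype.image_preimage_coe]
    rw [inter_eq_self_of_subset_right hS, ← hCS, compl_compl]
  calc #{C : Set M | IsClosed C} ≤ #(Set b) := (mk_le_mk_of_subset hsub).trans mk_range_le
    _ = 2 ^ #b := mk_set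
    _ ≤ 2 ^ ℵ₀ :=
      power_le_power_left two_ne_zero (TopologicalSpace.countable_countableBasis M).le_aleph0
    _ = 𝔠 := two_power_aleph0

theorem exists_countable_isClosed_sUnion_eq_range {X : Type u} [TopologicalSpace X]
    (Ω : Type u) [LinearOrder Ω] [ContinuumOrder Ω] [T3Space M]
    (hX : ProductivelyQuasiLindelofSp X) {i : X → M} (hi : Continuous i) :
    ∃ 𝒞 : Set (Set M), 𝒞.Countable ∧ (∀ C ∈ 𝒞, IsClosed C) ∧ ⋃₀ 𝒞 = range i := by
  let 𝒵 : Set (Set M) := {C | IsClosed C ∧ C ⊆ range i}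
  have : Nonempty 𝒵 := ⟨⟨∅, isClosed_empty, empty_subset _⟩⟩
  obtain ⟨f, hf⟩ := ContinuumOrder.exists_surjective Ω (T := 𝒵)
    ((mk_le_mk_of_subset fun _ hC => hC.1).trans mk_isClosed_le_continuum)
  have h𝒵 : range (fun β => (f β : Set M)) = 𝒵 := by
    rw [range_comp' Subtype.val f, hf.range_eq, image_univ, Subtype.range_coe]
  have hcov : CountablyCoveredBy (range i) (range fun β => (f β : Set M)) := by
    refine countablyCoveredBy_range_of_productivelyQuasiLindelof hX hi
      (HereditarilyLindelofSpace.isLindelof (range i)ᶜ) disjoint_compl_left ?_ fun O hO hLO => ?_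
    · rintro _ ⟨x, rfl⟩
      rw [← sUnion_range, h𝒵]
      exact ⟨{i x}, ⟨isClosed_singleton, singleton_subset_iff.2 ⟨x, rfl⟩⟩, rfl⟩
    · rw [h𝒵]
      refine ⟨{Oᶜ}, singleton_subset_iff.2 ⟨hO.isClosed_compl, compl_subset_comm.1 hLO⟩,
        countable_singleton _, ?_⟩
      rw [sUnion_singleton]
      exact fun _ h => h.2
  rw [h𝒵] at hcov
  obtain ⟨𝒞, h𝒞, hc, hi𝒞⟩ := hcov
  exact ⟨𝒞, hc, fun C hC => (h𝒞 hC).1, (sUnion_subset fun C hC => (h𝒞 hC).2).antisymm hi𝒞⟩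

end SecondCountableImages

section Topology

open Filter

theorem isLindelof_preimage_of_isProperMap_s1 {B M : Type*} [TopologicalSpace B] [TopologicalSpace M]
    {p : B → M} (hp : IsProperMap p) {T : Set M} (hT : IsLindelof T) : IsLindelof (p ⁻¹' T) := by
  intro f _ _ hf
  obtain ⟨t, htT, ht⟩ := hT (f := map p f) (by rwa [le_principal_iff] at hf ⊢)
  obtain ⟨b, rfl, hb⟩ := hp.clusterPt_of_mapClusterPt ht
  exact ⟨b, htT, hb⟩

theorem exists_mem_forall_notMem_of_subset_closure_sdiff {M : Type*} [TopologicalSpace M]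
    [T2Space M] {K : Set M} (hK : IsCompact K) (hne : K.Nonempty) {𝒟 : Set (Set M)}
    (h𝒟 : 𝒟.Countable) (hcl : ∀ D ∈ 𝒟, IsClosed D) (hdense : ∀ D ∈ 𝒟, K ⊆ closure (K \ D)) :
    ∃ t ∈ K, ∀ D ∈ 𝒟, t ∉ D := by
  have := isCompact_iff_compactSpace.1 hK
  have := hne.to_subtype
  have hd : Dense (⋂ D ∈ 𝒟, ((↑) : K → M) ⁻¹' Dᶜ) := by
    refine dense_biInter_of_isOpen
      (fun D hD => (hcl D hD).isOpen_compl.preimage continuous_subtype_val) h𝒟 fun D hD => ?_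
    rw [Subtype.dense_iff, Subtype.image_preimage_coe]
    exact hdense D hD
  obtain ⟨t, ht⟩ := hd.nonempty
  exact ⟨t, t.2, mem_iInter₂.1 ht⟩

theorem subset_closure_sdiff_range {B X ι : Type*} [TopologicalSpace B] [TopologicalSpace X]
    [LocallyCompactSpace B] {e : X → B} (he : IsInducing e) {Z : ι → Set B}
    (hcpt : ∀ K : Set X, IsCompact K → ∃ β, e '' K ⊆ Z β) {K : Set B} (hK : IsClosed K)
    (hKZ : ∀ β, K ⊆ closure (K \ Z β)) : K ⊆ closure (K \ range e) := by
  intro b hb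
  by_contra hcl
  obtain ⟨N, hNb, hNcl, hN⟩ := local_compact_nhds (isClosed_closure.isOpen_compl.mem_nhds hcl)
  have hKN : K ∩ N ⊆ range e := fun c hc =>
    not_not.1 fun h => hNcl hc.2 (subset_closure ⟨hc.1, h⟩)
  obtain ⟨β, hβ⟩ := hcpt (e ⁻¹' (K ∩ N)) <|
    he.isCompact_iff.2 (by rw [image_preimage_eq_of_subset hKN]; exact hN.inter_left hK)
  rw [image_preimage_eq_of_subset hKN] at hβ
  obtain ⟨c, hcN, hcK, hcZ⟩ := mem_closure_iff_nhds.1 (hKZ β hb) N hNb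
  exact hcZ (hβ ⟨hcK, hcN⟩)

variable {B : Type*} [TopologicalSpace B] {f : Filter B}

theorem compl_mem_of_forall_not_clusterPt {L : Set B} (hL : IsCompact L)
    (h : ∀ x ∈ L, ¬ ClusterPt x f) : Lᶜ ∈ f :=
  hL.compl_mem_sets fun x hx => by
    rw [not_neBot.1 (h x hx)]
    exact mem_bot

theorem clusterPt_subset_closure_sdiff [LocallyCompactSpace B] [CountableInterFilter f]
    {Z : Set B} (hZ : IsGδ Z) (hZf : Zᶜ ∈ f) :
    {x | ClusterPt x f} ⊆ closure ({x | ClusterPt x f} \ Z) := by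
  intro x hx
  by_contra hcl
  obtain ⟨N, hNx, hNcl, hN⟩ :=
    local_compact_nhds (isClosed_closure.isOpen_compl.mem_nhds hcl)
  obtain ⟨G, hG, rfl⟩ := isGδ_iff_eq_iInter_nat.1 hZ
  have hdiff (n : ℕ) : (N \ G n)ᶜ ∈ f :=
    compl_mem_of_forall_not_clusterPt (hN.diff (hG n)) fun y hy hyf =>
      hNcl hy.1 (subset_closure ⟨hyf, fun hyG => hy.2 (mem_iInter.1 hyG n)⟩)
  have hNf : Nᶜ ∈ f := by
    filter_upwards [countable_iInter_mem.2 hdiff, hZf] with y hy hyZ hyN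
    exact hyZ (mem_iInter.2 fun n => not_not.1 fun h => mem_iInter.1 hy n ⟨hyN, h⟩)
  exact hx.frequently hNx (mem_of_superset hNf fun _ h => h)

end Topology

section Cylinders

variable {ι F : Type*} [TopologicalSpace F]

theorem exists_finset_forall_eqOn_mem {L U : Set (ι → F)} (hL : IsCompact L) (hU : IsOpen U)
    (hLU : L ⊆ U) : ∃ s : Finset ι, ∀ b ∈ L, ∀ c, EqOn b c s → c ∈ U := by
  classical
  refine hL.induction_on (p := fun L => ∃ s : Finset ι, ∀ b ∈ L, ∀ c, EqOn b c s → c ∈ U)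
    ⟨∅, fun _ h => h.elim⟩ ?_ ?_ fun b hb => ?_
  · rintro L L' hLL' ⟨s, hs⟩
    exact ⟨s, fun b hb => hs b (hLL' hb)⟩
  · rintro L L' ⟨s, hs⟩ ⟨s', hs'⟩
    refine ⟨s ∪ s', fun b hb c hbc => ?_⟩
    rw [Finset.coe_union, eqOn_union] at hbc
    exact hb.elim (fun h => hs b h c hbc.1) fun h => hs' b h c hbc.2
  · obtain ⟨s, u, hu, hsU⟩ := isOpen_pi_iff.1 hU b (hLU hb)
    refine ⟨(s : Set ι).pi u, mem_nhdsWithin_of_mem_nhds <|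
      set_pi_mem_nhds s.finite_toSet fun i hi => (hu i hi).1.mem_nhds (hu i hi).2, s, ?_⟩
    exact fun b' hb' c hc => hsU fun i hi => hc hi ▸ hb' i hi

theorem mem_closure_of_forall_finset_restrict {A : Set (ι → F)} {b : ι → F}
    (h : ∀ s : Finset ι, s.restrict b ∈ closure (s.restrict '' A)) : b ∈ closure A := by
  refine mem_closure_iff.2 fun O hO hbO => ?_
  obtain ⟨s, u, hu, hsO⟩ := isOpen_pi_iff.1 hO b hbO
  obtain ⟨_, hau, a, haA, rfl⟩ := mem_closure_iff.1 (h s) (Set.univ.pi fun i : s => u i)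
    (isOpen_set_pi finite_univ fun i _ => (hu i i.2).1) fun i _ => (hu i i.2).2
  exact ⟨a, hsO fun i hi => hau ⟨i, hi⟩ (mem_univ _), haA⟩

theorem exists_countable_forall_not_eqOn [T2Space F] {X : Type*} [TopologicalSpace X]
    [LindelofSpace X] {e : X → ι → F} (he : Continuous e) {b : ι → F} (hb : b ∉ range e) :
    ∃ S : Set ι, S.Countable ∧ ∀ x, ¬ EqOn b (e x) S := by
  have hcov : Set.univ ⊆ ⋃ i, {x | b i ≠ e x i} := fun x _ => mem_iUnion.2 <| by
    by_contra! h
    exact hb ⟨x, funext fun i => (not_not.1 (h i)).symm⟩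
  obtain ⟨S, hS, hSX⟩ := isLindelof_univ.elim_countable_subcover _
    (fun i => isOpen_ne_fun continuous_const ((continuous_apply i).comp he)) hcov
  refine ⟨S, hS, fun x hx => ?_⟩
  obtain ⟨i, hi, hxi⟩ := mem_iUnion₂.1 (hSX (mem_univ x))
  exact hxi (hx hi)

/-- The set `Z` is a closed set depending only on the coordinates in `S`. -/
def IsClosedCylinder (S : Set ι) (Z : Set (ι → F)) : Prop :=
  ∃ C : Set (S → F), IsClosed C ∧ S.domRestrict ⁻¹' C = Z

namespace IsClosedCylinder

variable {S T : Set ι} {Z : Set (ι → F)}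

theorem isClosed (hZ : IsClosedCylinder S Z) : IsClosed Z := by
  obtain ⟨C, hC, rfl⟩ := hZ
  exact hC.preimage (Pi.continuous_domRestrict S)

theorem isGδ [T3Space F] [SecondCountableTopology F] (hS : S.Countable)
    (hZ : IsClosedCylinder S Z) : IsGδ Z := by
  have := hS.to_subtype
  obtain ⟨C, hC, rfl⟩ := hZ
  have := TopologicalSpace.metrizableSpace_of_t3_secondCountable (S → F)
  exact hC.isGδ.preimage (Pi.continuous_domRestrict S)

theorem mem_congr (hZ : IsClosedCylinder S Z) {b c : ι → F} (h : EqOn b c S) : b ∈ Z ↔ c ∈ Z := by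
  obtain ⟨C, -, rfl⟩ := hZ
  rw [mem_preimage, mem_preimage, domRestrict_eq_domRestrict_iff.2 h]

theorem mono (hZ : IsClosedCylinder S Z) (hST : S ⊆ T) : IsClosedCylinder T Z := by
  obtain ⟨C, hC, rfl⟩ := hZ
  exact ⟨(fun c i => c (inclusion hST i)) ⁻¹' C, hC.preimage (by fun_prop), rfl⟩

theorem image_subset_closure_image_sdiff (hZ : IsClosedCylinder S Z) {K : Set (ι → F)}
    (hK : K ⊆ closure (K \ Z)) :
    S.domRestrict '' K ⊆ closure (S.domRestrict '' K \ S.domRestrict '' Z) := by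
  refine image_subset_iff.2 fun b hb =>
    map_mem_closure (Pi.continuous_domRestrict S) (hK hb) ?_
  rintro c ⟨hcK, hcZ⟩
  refine ⟨mem_image_of_mem _ hcK, ?_⟩
  rintro ⟨d, hd, hdc⟩
  exact hcZ ((hZ.mem_congr (domRestrict_eq_domRestrict_iff.1 hdc)).1 hd)

end IsClosedCylinder

theorem isClosedCylinder_preimage_image [T2Space F] {L : Set (ι → F)} (hL : IsCompact L)
    (S : Set ι) : IsClosedCylinder S (S.domRestrict ⁻¹' (S.domRestrict '' L)) :=
  ⟨_, (hL.image (Pi.continuous_domRestrict S)).isClosed, rfl⟩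

theorem exists_isClosedCylinder_of_isCompact_of_isGδ [T2Space F] {L H : Set (ι → F)}
    (hL : IsCompact L) (hH : IsGδ H) (hLH : L ⊆ H) :
    ∃ (S : Set ι) (Z : Set (ι → F)), S.Countable ∧ IsClosedCylinder S Z ∧ L ⊆ Z ∧ Z ⊆ H := by
  obtain ⟨G, hG, rfl⟩ := isGδ_iff_eq_iInter_nat.1 hH
  choose s hs using fun n =>
    exists_finset_forall_eqOn_mem hL (hG n) (hLH.trans (iInter_subset G n))
  let S : Set ι := ⋃ n, (s n : Set ι)
  have hsS (n : ℕ) : (s n : Set ι) ⊆ S := subset_iUnion (fun n => (s n : Set ι)) n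
  refine ⟨S, S.domRestrict ⁻¹' (S.domRestrict '' L),
    countable_iUnion fun n => (s n).countable_toSet,
    isClosedCylinder_preimage_image hL S, subset_preimage_image _ _, ?_⟩
  rintro c ⟨b, hb, hbc⟩
  exact mem_iInter.2 fun n =>
    hs n b hb c ((domRestrict_eq_domRestrict_iff.1 hbc).mono (hsS n))

end Cylinders

section ClosingOff

variable {Ω : Type u} [LinearOrder Ω] [ContinuumOrder Ω] {F : Type} [TopologicalSpace F]
  [SecondCountableTopology F]

theorem mk_isClosedCylinder_Iio_le_continuum :
    #{Z : Set (Ω → F) | ∃ α : Ω, IsClosedCylinder (Iio α) Z} ≤ 𝔠 := by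
  have hα (α : Ω) : #{Z : Set (Ω → F) | IsClosedCylinder (Iio α) Z} ≤ 𝔠 :=
    (mk_image_le (s := {C : Set (Iio α → F) | IsClosed C})).trans mk_isClosed_le_continuum
  rw [← iUnion_ofPred]
  calc _ ≤ #Ω * ⨆ α : Ω, #{Z : Set (Ω → F) | IsClosedCylinder (Iio α) Z} := mk_iUnion_le _
    _ ≤ 𝔠 * 𝔠 := mul_le_mul' ContinuumOrder.mk_eq_continuum.le (ciSup_le' hα)
    _ = 𝔠 := continuum_mul_self

theorem exists_countable_subset_subset_closure {M : Type*} [TopologicalSpace M]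
    [SecondCountableTopology M] (A : Set M) : ∃ t ⊆ A, t.Countable ∧ A ⊆ closure t := by
  obtain ⟨t, ht, htd⟩ := TopologicalSpace.exists_countable_dense A
  exact ⟨_, Subtype.coe_image_subset A t, ht.image _, Subtype.dense_iff.1 htd⟩

variable {D : Ω → Set (Ω → F)}

theorem exists_domRestrict_mem_closure (hD : Monotone D) {S : Set Ω} (hS : S.Countable) :
    ∃ β, ∀ b ∈ closure (⋃ α, D α), S.domRestrict b ∈ closure (S.domRestrict '' D β) := by
  have := hS.to_subtype
  have := ContinuumOrder.uncountable Ω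
  obtain ⟨t, ht, htc, htd⟩ := exists_countable_subset_subset_closure (S.domRestrict '' ⋃ α, D α)
  rw [image_iUnion] at ht
  choose! a ha using fun y (hy : y ∈ t) => mem_iUnion.1 (ht hy)
  obtain ⟨β, hβ⟩ := ContinuumOrder.exists_forall_lt (htc.image a)
  have htβ : t ⊆ S.domRestrict '' D β := fun y hy =>
    image_mono (hD (hβ _ ⟨y, hy, rfl⟩).le) (ha y hy)
  refine ⟨β, fun b hb => closure_minimal (htd.trans (closure_mono htβ)) isClosed_closure ?_⟩
  exact map_mem_closure (Pi.continuous_domRestrict S) hb (mapsTo_image _ _)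

theorem exists_domRestrict_Iio_mem_closure (hD : Monotone D) :
    ∃ γ, ∀ b ∈ closure (⋃ α, D α),
      (Iio γ).domRestrict b ∈ closure ((Iio γ).domRestrict '' D γ) := by
  choose f hf using fun α : Ω =>
    exists_domRestrict_mem_closure hD (ContinuumOrder.countable_Iic α)
  obtain ⟨γ, hne, hγ⟩ := ContinuumOrder.exists_forall_lt_map_lt f
  refine ⟨γ, fun b hb => mem_closure_of_forall_finset_restrict fun s => ?_⟩
  have := hne.to_subtype
  obtain ⟨⟨α, hαγ⟩, hα⟩ := s.exists_le
  let π (c : Iic α → F) (i : s) : F := c ⟨i, hα i i.2⟩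
  refine map_mem_closure (f := π) (by fun_prop) (hf α b hb) ?_
  rintro _ ⟨c, hc, rfl⟩
  exact ⟨_, ⟨c, hD (hγ α hαγ).le hc, rfl⟩, rfl⟩

end ClosingOff

section AvoidingSet

variable {Ω : Type u} [LinearOrder Ω] {F : Type} {X : Type u}

/-- The points of the cube whose restriction to the coordinates below `α` differs from that of
every point of the range of `e`. -/
def distinguishedAt (e : X → Ω → F) (α : Ω) : Set (Ω → F) :=
  {b | ∀ x, ¬ EqOn b (e x) (Iio α)}

variable {e : X → Ω → F}

theorem monotone_distinguishedAt : Monotone (distinguishedAt e) :=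
  fun _ _ h _ hb x hx => hb x (hx.mono (Iio_subset_Iio h))

variable [TopologicalSpace F]

/-- The points that are distinguished at `α` from the range of `e` and avoid each of the first `α`
members of the family `Z` that is already a cylinder over the coordinates below `α`. The
union of these sets over all `α` plays the role of the rationals in Michael's construction. -/
def avoidingSet (e : X → Ω → F) (Z : Ω → Set (Ω → F)) (α : Ω) : Set (Ω → F) :=
  {b ∈ distinguishedAt e α | ∀ β ≤ α, IsClosedCylinder (Iio α) (Z β) → b ∉ Z β}

variable {Z : Ω → Set (Ω → F)}

theorem disjoint_iUnion_avoidingSet_range : Disjoint (⋃ α, avoidingSet e Z α) (range e) := by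
  rw [disjoint_left]
  rintro _ hb ⟨x, rfl⟩
  obtain ⟨α, hα⟩ := mem_iUnion.1 hb
  exact hα.1 x (eqOn_refl _ _)

theorem mem_avoidingSet_of_eqOn {α : Ω} {b c : Ω → F} (hb : b ∈ avoidingSet e Z α)
    (hbc : EqOn b c (Iio α)) : c ∈ avoidingSet e Z α :=
  ⟨fun x hx => hb.1 x (hbc.trans hx),
    fun β hβ hZ hc => hb.2 β hβ hZ ((hZ.mem_congr hbc).2 hc)⟩

theorem inter_iUnion_avoidingSet_subset {β a : Ω} (hβ : β ≤ a)
    (hZ : IsClosedCylinder (Iio a) (Z β)) :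
    Z β ∩ ⋃ α, avoidingSet e Z α ⊆ ⋃ α ∈ Iio a, avoidingSet e Z α := by
  rintro b ⟨hbZ, hb⟩
  obtain ⟨α, hα⟩ := mem_iUnion.1 hb
  refine mem_biUnion (not_le.1 fun h => ?_) hα
  exact hα.2 β (hβ.trans h) (hZ.mono (Iio_subset_Iio h)) hbZ

variable [ContinuumOrder Ω]

theorem isLindelof_avoidingSet [CompactSpace F] [T2Space F] [SecondCountableTopology F]
    (α : Ω) : IsLindelof (avoidingSet e Z α) := by
  have hproper : IsProperMap ((Iio α).domRestrict : (Ω → F) → Iio α → F) :=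
    (Pi.continuous_domRestrict _).isProperMap
  have hsat : (Iio α).domRestrict ⁻¹' ((Iio α).domRestrict '' avoidingSet e Z α) =
      avoidingSet e Z α := by
    refine Subset.antisymm ?_ (subset_preimage_image _ _)
    rintro c ⟨b, hb, hbc⟩
    exact mem_avoidingSet_of_eqOn hb (domRestrict_eq_domRestrict_iff.1 hbc)
  rw [← hsat]
  exact isLindelof_preimage_of_isProperMap_s1 hproper (HereditarilyLindelofSpace.isLindelof _)

variable [TopologicalSpace X]

theorem iUnion_distinguishedAt [T2Space F] [LindelofSpace X] (he : Continuous e) :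
    ⋃ α, distinguishedAt e α = (range e)ᶜ := by
  ext b
  rw [mem_iUnion]
  constructor
  · rintro ⟨α, hα⟩ ⟨x, rfl⟩
    exact hα x (eqOn_refl _ _)
  · intro hb
    obtain ⟨S, hS, hbS⟩ := exists_countable_forall_not_eqOn he hb
    obtain ⟨α, hα⟩ := ContinuumOrder.exists_forall_lt hS
    exact ⟨α, fun x hx => hbS x (hx.mono hα)⟩

theorem exists_domRestrict_image_subset_closure_sdiff_range [T2Space F] [SecondCountableTopology F]
    [LindelofSpace X] (he : Continuous e)
    {K : Set (Ω → F)} (hK : K ⊆ closure (K \ range e)) :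
    ∃ γ, (Iio γ).domRestrict '' K ⊆
      closure ((Iio γ).domRestrict '' K \ range fun x => (Iio γ).domRestrict (e x)) := by
  have hD : Monotone fun α => K ∩ distinguishedAt e α :=
    fun _ _ h => inter_subset_inter_right K (monotone_distinguishedAt h)
  obtain ⟨γ, hγ⟩ := exists_domRestrict_Iio_mem_closure hD
  rw [← inter_iUnion, iUnion_distinguishedAt he, ← sdiff_eq] at hγ
  refine ⟨γ, image_subset_iff.2 fun b hb => closure_mono ?_ (hγ b (hK hb))⟩
  rintro _ ⟨c, ⟨hcK, hc⟩, rfl⟩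
  refine ⟨⟨c, hcK, rfl⟩, ?_⟩
  rintro ⟨x, hx⟩
  exact hc x (domRestrict_eq_domRestrict_iff.1 hx.symm)

variable [CompactSpace F] [T2Space F] [SecondCountableTopology F]

theorem exists_mem_avoidingSet [LindelofSpace X] (hX : ProductivelyQuasiLindelofSp X)
    (he : IsInducing e) (hZ : ∀ β, IsClosed (Z β))
    (hcpt : ∀ K : Set X, IsCompact K → ∃ β, e '' K ⊆ Z β) {K : Set (Ω → F)} (hK : IsCompact K)
    (hne : K.Nonempty) (hKZ : ∀ β, K ⊆ closure (K \ Z β)) :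
    ∃ b ∈ K, ∃ α, b ∈ avoidingSet e Z α := by
  obtain ⟨γ, hγ⟩ := exists_domRestrict_image_subset_closure_sdiff_range he.continuous
    (subset_closure_sdiff_range he hcpt hK.isClosed hKZ)
  set r : (Ω → F) → Iio γ → F := (Iio γ).domRestrict
  have hr : Continuous r := Pi.continuous_domRestrict _
  obtain ⟨𝒞, h𝒞, h𝒞cl, h𝒞e⟩ :=
    exists_countable_isClosed_sUnion_eq_range Ω hX (hr.comp he.continuous)
  let I : Set Ω := {β | β ≤ γ ∧ IsClosedCylinder (Iio γ) (Z β)}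
  have hI : I.Countable := (ContinuumOrder.countable_Iic γ).mono fun _ h => h.1
  have hcl : ∀ D ∈ 𝒞 ∪ (fun β => r '' Z β) '' I, IsClosed D := by
    rintro _ (hC | ⟨β, -, rfl⟩)
    · exact h𝒞cl _ hC
    · exact ((hZ β).isCompact.image hr).isClosed
  have hdense : ∀ D ∈ 𝒞 ∪ (fun β => r '' Z β) '' I, r '' K ⊆ closure (r '' K \ D) := by
    rintro _ (hC | ⟨β, hβ, rfl⟩)
    · refine hγ.trans (closure_mono (sdiff_subset_sdiff_right ?_))
      exact (subset_sUnion_of_mem hC).trans h𝒞e.subset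
    · exact hβ.2.image_subset_closure_image_sdiff (hKZ β)
  obtain ⟨_, ⟨b, hbK, rfl⟩, hb⟩ := exists_mem_forall_notMem_of_subset_closure_sdiff (hK.image hr)
    (hne.image r) (h𝒞.union (hI.image _)) hcl hdense
  refine ⟨b, hbK, γ, fun x hx => ?_, fun β hβ hZβ hbZ => ?_⟩
  · have hbe : r b ∈ range (r ∘ e) := ⟨x, (domRestrict_eq_domRestrict_iff.2 hx).symm⟩
    rw [← h𝒞e] at hbe
    obtain ⟨C, hC, hbC⟩ := hbe
    exact hb C (Or.inl hC) hbC
  · exact hb _ (Or.inr ⟨β, ⟨hβ, hZβ⟩, rfl⟩) ⟨b, hbZ, rfl⟩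

theorem countablyCoveredBy_univ_of_iUnion_avoidingSet_subset [LindelofSpace X]
    (hX : ProductivelyQuasiLindelofSp X) (he : IsInducing e)
    (hZ : ∀ β, ∃ α, IsClosedCylinder (Iio α) (Z β))
    (hcpt : ∀ K : Set X, IsCompact K → ∃ β, e '' K ⊆ Z β) {𝒱 : Set (Set (Ω → F))}
    (h𝒱 : ∀ V ∈ 𝒱, IsOpen V) (hcov : ⋃ α, avoidingSet e Z α ⊆ ⋃₀ 𝒱) :
    CountablyCoveredBy Set.univ (𝒱 ∪ range Z) := by
  by_contra hcon
  let f := coveringFilter (𝒱 ∪ range Z)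
  have : f.NeBot := Filter.neBot_iff.2 (coveringFilter_eq_bot.not.2 hcon)
  have hmem {C : Set (Ω → F)} (hC : C ∈ 𝒱 ∪ range Z) : Cᶜ ∈ f := compl_mem_coveringFilter_of_mem hC
  obtain ⟨b, hb, α, hbα⟩ := exists_mem_avoidingSet hX he
    (fun β => (hZ β).choose_spec.isClosed) hcpt
    (isClosed_setOfPred_clusterPt (f := f)).isCompact (exists_clusterPt_of_compactSpace f)
    fun β => clusterPt_subset_closure_sdiff
      ((hZ β).choose_spec.isGδ (to_countable _)) (hmem (Or.inr ⟨β, rfl⟩))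
  obtain ⟨V, hV, hbV⟩ := hcov (mem_iUnion.2 ⟨α, hbα⟩)
  exact hb.frequently ((h𝒱 V hV).mem_nhds hbV)
    (Filter.mem_of_superset (hmem (Or.inl hV)) fun _ h => h)

theorem isLindelof_iUnion_avoidingSet [LindelofSpace X]
    (hX : ProductivelyQuasiLindelofSp X) (he : IsInducing e)
    (hZ : ∀ β, ∃ α, IsClosedCylinder (Iio α) (Z β))
    (hcpt : ∀ K : Set X, IsCompact K → ∃ β, e '' K ⊆ Z β) :
    IsLindelof (⋃ α, avoidingSet e Z α) := by
  refine isLindelof_iff_countablyCoveredBy.2 fun 𝒰 hU hcov => ?_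
  refine ((countablyCoveredBy_univ_of_iUnion_avoidingSet_subset hX he hZ hcpt hU hcov).mono_left
    (subset_univ _)).trans ?_
  rintro _ (hV | ⟨β, rfl⟩)
  · exact .of_mem hV inter_subset_left
  · obtain ⟨α, hα⟩ := hZ β
    have hsub := inter_iUnion_avoidingSet_subset (e := e) (le_max_left β α)
      (hα.mono (Iio_subset_Iio (le_max_right β α)))
    have hL : IsLindelof (⋃ γ ∈ Iio (max β α), avoidingSet e Z γ) :=
      (to_countable _).isLindelof_biUnion fun γ _ => isLindelof_avoidingSet γ
    refine (isLindelof_iff_countablyCoveredBy.1 hL 𝒰 hU ?_).mono_left hsub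
    exact (iUnion₂_subset fun γ _ => subset_iUnion _ γ).trans hcov

theorem countablyCoveredBy_range_of_isCompact_image_subset [LindelofSpace X]
    (hX : ProductivelyQuasiLindelofSp X) (he : IsInducing e)
    (hZ : ∀ β, ∃ α, IsClosedCylinder (Iio α) (Z β))
    (hcpt : ∀ K : Set X, IsCompact K → ∃ β, e '' K ⊆ Z β) :
    CountablyCoveredBy (range e) (range Z) := by
  refine countablyCoveredBy_range_of_productivelyQuasiLindelof hX he.continuous
    (isLindelof_iUnion_avoidingSet hX he hZ hcpt) disjoint_iUnion_avoidingSet_range ?_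
    fun O hO hLO => ?_
  · rintro _ ⟨x, rfl⟩
    obtain ⟨β, hβ⟩ := hcpt {x} isCompact_singleton
    exact mem_iUnion.2 ⟨β, hβ ⟨x, rfl, rfl⟩⟩
  · refine ((countablyCoveredBy_univ_of_iUnion_avoidingSet_subset hX he hZ hcpt (𝒱 := {O})
      (by rintro _ rfl; exact hO) (by rwa [sUnion_singleton])).mono_left
      (subset_univ _)).trans ?_
    rintro _ (rfl | ⟨β, rfl⟩)
    · rw [inter_sdiff_self]
      exact ⟨∅, empty_subset _, countable_empty, empty_subset _⟩
    · exact .of_mem ⟨β, rfl⟩ inter_subset_left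

end AvoidingSet

section Alster

/-- Alster's covering property: every family of `Gδ` sets that captures each compact set in one of
its members has a countable subcover. -/
def AlsterSp (X : Type u) [TopologicalSpace X] : Prop :=
  ∀ 𝒢 : Set (Set X), (∀ G ∈ 𝒢, IsGδ G) → (∀ K, IsCompact K → ∃ G ∈ 𝒢, K ⊆ G) →
    CountablyCoveredBy Set.univ 𝒢

theorem exists_isGδ_preimage_eq {X B : Type*} [TopologicalSpace X] [TopologicalSpace B]
    {e : X → B} (he : IsInducing e) {G : Set X} (hG : IsGδ G) : ∃ H, IsGδ H ∧ e ⁻¹' H = G := by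
  obtain ⟨U, hU, rfl⟩ := isGδ_iff_eq_iInter_nat.1 hG
  choose O hO hOU using fun n => he.isOpen_iff.1 (hU n)
  exact ⟨⋂ n, O n, .iInter_of_isOpen hO, by rw [preimage_iInter, iInter_congr hOU]⟩

variable {Ω : Type u} [LinearOrder Ω] [ContinuumOrder Ω] {X : Type u} [TopologicalSpace X]

theorem exists_isClosedCylinder_Iio {F : Type*} [TopologicalSpace F] [T2Space F]
    {e : X → Ω → F} (he : IsInducing e) {K G : Set X} (hK : IsCompact K) (hG : IsGδ G)
    (hKG : K ⊆ G) :
    ∃ (α : Ω) (Z : Set (Ω → F)), IsClosedCylinder (Iio α) Z ∧ e '' K ⊆ Z ∧ e ⁻¹' Z ⊆ G := by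
  obtain ⟨H, hH, rfl⟩ := exists_isGδ_preimage_eq he hG
  obtain ⟨S, Z, hS, hZ, hKZ, hZH⟩ := exists_isClosedCylinder_of_isCompact_of_isGδ
    (hK.image he.continuous) hH (image_subset_iff.2 hKG)
  obtain ⟨α, hα⟩ := ContinuumOrder.exists_forall_lt hS
  exact ⟨α, Z, hZ.mono hα, hKZ, preimage_mono hZH⟩

theorem alsterSp_of_productivelyQuasiLindelof {F : Type} [TopologicalSpace F] [CompactSpace F]
    [T2Space F] [SecondCountableTopology F] [LindelofSpace X]
    (hX : ProductivelyQuasiLindelofSp X) {e : X → Ω → F} (he : IsInducing e) : AlsterSp X := by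
  intro 𝒢 h𝒢 hcpt
  let 𝒵 : Set (Set (Ω → F)) :=
    {Z | (∃ α, IsClosedCylinder (Iio α) Z) ∧ ∃ G ∈ 𝒢, e ⁻¹' Z ⊆ G}
  have h𝒵 (K : Set X) (hK : IsCompact K) : ∃ Z : 𝒵, e '' K ⊆ Z := by
    obtain ⟨G, hG, hKG⟩ := hcpt K hK
    obtain ⟨α, Z, hZ, hKZ, hZG⟩ := exists_isClosedCylinder_Iio he hK (h𝒢 G hG) hKG
    exact ⟨⟨Z, ⟨α, hZ⟩, G, hG, hZG⟩, hKZ⟩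
  have : Nonempty 𝒵 := (h𝒵 ∅ isCompact_empty).nonempty
  obtain ⟨f, hf⟩ := ContinuumOrder.exists_surjective Ω (T := 𝒵)
    ((mk_le_mk_of_subset fun _ hZ => hZ.1).trans mk_isClosedCylinder_Iio_le_continuum)
  obtain ⟨T, hT, hcov⟩ := countablyCoveredBy_range.1 <|
    countablyCoveredBy_range_of_isCompact_image_subset (Z := fun β => (f β : Set (Ω → F))) hX he
      (fun β => (f β).2.1) fun K hK => hf.exists.1 (h𝒵 K hK)
  choose G hG hfG using fun β => (f β).2.2
  refine ⟨G '' T, image_subset_iff.2 fun β _ => hG β, hT.image G, fun x _ => ?_⟩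
  obtain ⟨β, hβ, hx⟩ := mem_iUnion₂.1 (hcov ⟨x, rfl⟩)
  exact ⟨G β, ⟨β, hβ, rfl⟩, hfG β hx⟩

end Alster

section Embedding

variable {X : Type u} [TopologicalSpace X] [NormalSpace X] [RegularSpace X]

theorem exists_isInducing_pi_unitInterval {𝓑 : Set (Set X)}
    (h𝓑 : TopologicalSpace.IsTopologicalBasis 𝓑) {ι : Type*}
    {g : ι → {UV : 𝓑 × 𝓑 // closure UV.1.1 ⊆ UV.2.1}} (hg : Function.Surjective g) :
    ∃ e : X → ι → unitInterval, IsInducing e := by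
  choose f hf0 hf1 hf using fun i => exists_continuous_zero_one_of_isClosed
    (isClosed_closure (s := (g i).1.1.1)) (h𝓑.isOpen (g i).1.2.2).isClosed_compl
    (disjoint_compl_right_iff_subset.2 (g i).2)
  let e (x : X) (i : ι) : unitInterval := ⟨f i x, hf i x⟩
  have he : Continuous e := by fun_prop
  refine ⟨e, isInducing_iff_nhds.2 fun x => le_antisymm he.continuousAt.le_comap fun W hW => ?_⟩
  obtain ⟨V, hV, hxV, hVW⟩ := h𝓑.mem_nhds_iff.1 hW
  obtain ⟨U, hU, hxU, hUV⟩ := h𝓑.exists_closure_subset (h𝓑.mem_nhds hV hxV)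
  obtain ⟨i, hi⟩ := hg ⟨(⟨U, hU⟩, ⟨V, hV⟩), hUV⟩
  have hx0 : e x i = 0 := Subtype.ext (hf0 i (subset_closure (by rwa [hi])))
  refine ⟨{c | c i ≠ 1}, (isOpen_ne_fun (continuous_apply i) continuous_const).mem_nhds ?_, ?_⟩
  · exact hx0.trans_ne zero_ne_one
  · refine fun y hy => hVW (not_not.1 fun hyV => hy (Subtype.ext (hf1 i ?_)))
    rwa [hi]

theorem exists_isInducing_of_weightLE (Ω : Type u) [LinearOrder Ω] [ContinuumOrder Ω]
    (hX : WeightLE X 𝔠) : ∃ e : X → Ω → unitInterval, IsInducing e := by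
  obtain ⟨𝓑, h𝓑, hcard⟩ := hX
  rcases isEmpty_or_nonempty X with _ | ⟨⟨x⟩⟩
  · exact ⟨isEmptyElim, ⟨Subsingleton.elim _ _⟩⟩
  obtain ⟨V, hV, hxV, -⟩ := h𝓑.mem_nhds_iff.1 (Filter.univ_mem (f := 𝓝 x))
  obtain ⟨U, hU, -, hUV⟩ := h𝓑.exists_closure_subset (h𝓑.mem_nhds hV hxV)
  have : Nonempty {UV : 𝓑 × 𝓑 // closure UV.1.1 ⊆ UV.2.1} := ⟨⟨(⟨U, hU⟩, ⟨V, hV⟩), hUV⟩⟩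
  obtain ⟨g, hg⟩ := ContinuumOrder.exists_surjective Ω <|
    calc #{UV : 𝓑 × 𝓑 // closure UV.1.1 ⊆ UV.2.1} ≤ #(𝓑 × 𝓑) := mk_subtype_le _
      _ = #𝓑 * #𝓑 := mul_def _ _ |>.symm
      _ ≤ 𝔠 * 𝔠 := mul_le_mul' hcard hcard
      _ = 𝔠 := continuum_mul_self
  exact exists_isInducing_pi_unitInterval h𝓑 hg

end Embedding

section Powers

theorem exists_mem_le_nhds_of_le_nhdsSet {X : Type*} [TopologicalSpace X] {K : Set X}
    (hK : IsCompact K) {f : Ultrafilter X} (hf : ↑f ≤ 𝓝ˢ K) : ∃ x ∈ K, ↑f ≤ 𝓝 x := by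
  by_contra! h
  have hdisj : Disjoint (𝓝ˢ K) f := hK.disjoint_nhdsSet_left.2 fun x hx =>
    (Ultrafilter.disjoint_iff_not_le.2 (h x hx)).symm
  exact Ultrafilter.disjoint_iff_not_le.1 hdisj.symm hf

theorem exists_pi_subset_of_isCompact {ι : Type*} {X : ι → Type*} [∀ i, TopologicalSpace (X i)]
    {K : ∀ i, Set (X i)} (hK : ∀ i, IsCompact (K i)) {O : Set (∀ i, X i)} (hO : IsOpen O)
    (hKO : Set.univ.pi K ⊆ O) :
    ∃ (I : Set ι) (V : ∀ i, Set (X i)), I.Finite ∧ (∀ i, IsOpen (V i) ∧ K i ⊆ V i) ∧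
      I.pi V ⊆ O := by
  have hmem : O ∈ Filter.pi fun i => 𝓝ˢ (K i) := by
    refine Filter.mem_iff_ultrafilter.2 fun f hf => ?_
    choose x hxK hx using fun i => exists_mem_le_nhds_of_le_nhdsSet (hK i)
      (f := f.map (Function.eval i)) ((Filter.tendsto_eval_pi _ i).mono_left hf)
    exact tendsto_pi_nhds.2 hx (hO.mem_nhds (hKO fun i _ => hxK i))
  obtain ⟨I, hI, t, ht, hIt⟩ := Filter.mem_pi.1 hmem
  choose V hV hKV hVt using fun i => mem_nhdsSet_iff_exists.1 (ht i)
  exact ⟨I, V, hI, fun i => ⟨hV i, hKV i⟩, (pi_mono fun i _ => hVt i).trans hIt⟩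

theorem exists_sequence_of_forall_exists_update {α : Type*} [Nonempty α] {Q : α → Prop}
    {P : ℕ → (ℕ → α) → Prop} (hcongr : ∀ {n K K'}, EqOn K K' (Iio n) → P n K → P n K')
    (hzero : ∀ K, P 0 K)
    (hsucc : ∀ n K, P n K → ∃ C, Q C ∧ P (n + 1) (Function.update K n C)) :
    ∃ K : ℕ → α, (∀ i, Q (K i)) ∧ ∀ n, P n K := by
  choose! next hQ hP using hsucc
  let σ (n : ℕ) : ℕ → α := n.rec (fun _ => Classical.arbitrary α)
    fun n K => Function.update K n (next n K)
  have hσ (n : ℕ) : σ (n + 1) = Function.update (σ n) n (next n (σ n)) := rfl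
  have hPσ (n : ℕ) : P n (σ n) := by
    induction n with
    | zero => exact hzero _
    | succ n ih => exact hσ n ▸ hP n _ ih
  have hstable {i n : ℕ} (hin : i < n) : σ n i = σ (i + 1) i := by
    induction n, hin using Nat.le_induction with
    | base => rfl
    | succ n hn ih => rw [hσ, Function.update_of_ne (Nat.ne_of_lt hn), ih]
  refine ⟨fun i => σ (i + 1) i, fun i => ?_, fun n => hcongr (fun i hi => hstable hi) (hPσ n)⟩
  change Q (σ (i + 1) i)
  rw [hσ, Function.update_self]
  exact hQ i _ (hPσ i)

variable {X : Type u} [TopologicalSpace X]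

/-- Every box whose first `n` sides are `Gδ` sets around `K 0, …, K (n - 1)`, and whose other sides
are `X`, is positive for the filter `f`: its complement does not belong to `f`. -/
def IsPositiveBox (f : Filter (ℕ → X)) (n : ℕ) (K : ℕ → Set X) : Prop :=
  ∀ H : ℕ → Set X, (∀ i < n, IsGδ (H i) ∧ K i ⊆ H i) → ((Iio n).pi H)ᶜ ∉ f

namespace IsPositiveBox

variable {f : Filter (ℕ → X)} {n : ℕ} {K : ℕ → Set X}

theorem congr {K' : ℕ → Set X} (hK : EqOn K K' (Iio n)) (h : IsPositiveBox f n K) :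
    IsPositiveBox f n K' :=
  fun H hH => h H fun i hi => ⟨(hH i hi).1, (hK hi).trans_subset (hH i hi).2⟩

theorem zero [f.NeBot] : IsPositiveBox f 0 K := by
  intro H _
  simp [Filter.empty_notMem]

theorem exists_update [CountableInterFilter f] (hX : AlsterSp X) (h : IsPositiveBox f n K) :
    ∃ C, IsCompact C ∧ IsPositiveBox f (n + 1) (Function.update K n C) := by
  by_contra! hcon
  simp only [IsPositiveBox, not_forall, not_not] at hcon
  choose H hH hHf using fun C : {C : Set X // IsCompact C} => hcon C C.2
  have hHn (C : {C : Set X // IsCompact C}) : IsGδ (H C n) ∧ C.1 ⊆ H C n := by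
    simpa only [Function.update_self] using hH C n n.lt_succ_self
  have hHi (C : {C : Set X // IsCompact C}) {i : ℕ} (hi : i < n) :
      IsGδ (H C i) ∧ K i ⊆ H C i := by
    simpa only [Function.update_of_ne hi.ne] using hH C i (hi.trans n.lt_succ_self)
  obtain ⟨T, hT, hcov⟩ := countablyCoveredBy_range.1 <| hX (range fun C => H C n)
    (forall_mem_range.2 fun C => (hHn C).1) fun C hC => ⟨_, ⟨⟨C, hC⟩, rfl⟩, (hHn ⟨C, hC⟩).2⟩
  refine h (fun i => ⋂ C ∈ T, H C i) (fun i hi => ⟨.biInter hT fun C _ => (hHi C hi).1,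
    subset_iInter₂ fun C _ => (hHi C hi).2⟩) ?_
  filter_upwards [(countable_bInter_mem hT).2 fun C _ => hHf C] with x hx hxn
  obtain ⟨C, hC, hxC⟩ := mem_iUnion₂.1 (hcov (mem_univ (x n)))
  refine mem_iInter₂.1 hx C hC fun i hi => ?_
  rcases Nat.lt_succ_iff_lt_or_eq.1 hi with hi | rfl
  · exact mem_iInter₂.1 (hxn i hi) C hC
  · exact hxC

end IsPositiveBox

theorem lindelofSpace_pi_of_alsterSp (hX : AlsterSp X) : LindelofSpace (ℕ → X) := by
  rw [← isLindelof_univ_iff, isLindelof_iff_countablyCoveredBy]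
  intro 𝒰 hU hcov
  by_contra hcon
  have : (coveringFilter 𝒰).NeBot := Filter.neBot_iff.2 (coveringFilter_eq_bot.not.2 hcon)
  obtain ⟨K, hK, hpos⟩ := exists_sequence_of_forall_exists_update
    (P := IsPositiveBox (coveringFilter 𝒰)) .congr (fun _ => .zero) fun _ _ h => h.exists_update hX
  have hKcov : CountablyCoveredBy (Set.univ.pi K) 𝒰 := isLindelof_iff_countablyCoveredBy.1
    (isCompact_univ_pi hK).isLindelof 𝒰 hU ((subset_univ _).trans hcov)
  obtain ⟨𝒱, h𝒱, h𝒱c, hK𝒱⟩ := hKcov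
  obtain ⟨I, V, hI, hV, hIV⟩ := exists_pi_subset_of_isCompact hK
    (isOpen_sUnion fun U hU' => hU U (h𝒱 hU')) hK𝒱
  obtain ⟨n, hn⟩ := hI.bddAbove
  refine hpos (n + 1) V (fun i _ => ⟨(hV i).1.isGδ, (hV i).2⟩) (compl_mem_coveringFilter.2 ?_)
  refine ⟨𝒱, h𝒱, h𝒱c, (pi_mono' (fun _ _ => Subset.rfl) ?_).trans hIV⟩
  exact fun i hi => Nat.lt_succ_of_le (hn hi)

end Powers

theorem ProductivelyLindelofSp.productivelyQuasiLindelofSp {X : Type u} [TopologicalSpace X]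
    (hX : ProductivelyLindelofSp X) : ProductivelyQuasiLindelofSp X :=
  fun Y _ hY => (hX Y hY).2.2

theorem ProductivelyLindelofSp.engLindelofSp_s1 {X : Type u} [TopologicalSpace X]
    (hX : ProductivelyLindelofSp X) : EngLindelofSp X := by
  have hunit : EngLindelofSp PUnit.{u + 1} :=
    engLindelofSp_iff_s1.2 ⟨inferInstance, inferInstance⟩
  obtain ⟨_, _⟩ := engLindelofSp_iff_s1.1 (hX PUnit hunit)
  let h : X × PUnit.{u + 1} ≃ₜ X := Homeomorph.prodPUnit X
  exact engLindelofSp_iff_s1.2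
    ⟨h.symm.isEmbedding.t3Space, .of_continuous_surjective h.continuous h.surjective⟩

/-- Under CH, every productively Lindelöf space of weight at most 𝔠
is powerfully Lindelöf. -/
theorem stmt1 (hCH : Cardinal.continuum = Cardinal.aleph 1)
    (X : Type u) [TopologicalSpace X]
    (hprod : ProductivelyLindelofSp X) (hw : WeightLE X Cardinal.continuum) :
    PowerfullyLindelofSp X := by
  obtain ⟨_, _⟩ := engLindelofSp_iff_s1.1 hprod.engLindelofSp_s1
  obtain ⟨Ω, _, _⟩ := exists_continuumOrder (continuum_eq_aleph_one_of_univ hCH)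
  obtain ⟨e, he⟩ := exists_isInducing_of_weightLE Ω hw
  have hAlster : AlsterSp X :=
    alsterSp_of_productivelyQuasiLindelof hprod.productivelyQuasiLindelofSp he
  exact engLindelofSp_iff_s1.2 ⟨inferInstance, lindelofSpace_pi_of_alsterSp hAlster⟩
end
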